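/- Let κ > 0 and let U ⊆ ℝ² be an open connected set whose complement K = ℝ² \ U is compact. Let θ ∈ ℝ² be a unit vector and let x₁, x₂ be two points lying on a common line with direction θ. Assume that the rays L⁺ = {x₁ + sθ : s > 0} and L⁻ = {x₂ − sθ : s > 0} are contained in U, and let Λ⁺ ⊆ L⁺ and Λ⁻ ⊆ L⁻ be nonempty open subintervals (nonempty relatively open subsets of the rays). If ψ₁ and ψ₂ are radiation solutions on U such that Im ψ₁(x) = Im ψ₂(x) for all x ∈ Λ⁺ ∪ Λ⁻, then ψ₁(x) = ψ₂(x) for all x ∈ L⁺ ∪ L⁻. -/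

import Mathlib

noncomputable section

open Real MeasureTheory Set

/-- The plane `ℝ²`. -/
abbrev R2 : Type := EuclideanSpace ℝ (Fin 2)

/-- The Laplacian of a complex-valued function on `ℝ²`, as the sum of the second
derivatives along the standard coordinate directions. -/
def laplacian2 (f : R2 → ℂ) (x : R2) : ℂ :=
  ∑ i : Fin 2,
    fderiv ℝ (fun y => fderiv ℝ f y (EuclideanSpace.single i 1)) x (EuclideanSpace.single i 1)

/-- `ψ` is a radiation solution of the Helmholtz equation `Δψ + κ²ψ = 0` on `U`:
it is `C²` on `U`, satisfies the Helmholtz equation on `U`, and satisfies the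
Sommerfeld radiation condition
`√|x| (∂ψ/∂|x| − iκψ)(x) → 0` as `|x| → ∞`, uniformly in `x/|x|`. -/
def IsRadiationSolution (κ : ℝ) (U : Set R2) (ψ : R2 → ℂ) : Prop :=
  ContDiffOn ℝ 2 ψ U ∧
  (∀ x ∈ U, laplacian2 ψ x + (κ : ℂ) ^ 2 * ψ x = 0) ∧
  ∀ ε > 0, ∃ R > 0, ∀ x ∈ U, R ≤ ‖x‖ →
    ‖(Real.sqrt ‖x‖ : ℂ) *
      (fderiv ℝ ψ x (‖x‖⁻¹ • x) - Complex.I * (κ : ℂ) * ψ x)‖ < ε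

open Filter Topology

/-! ### Holomorphic parameter integrals -/

/-- An integral depending holomorphically on a parameter, with a locally uniform integrable bound,
is holomorphic in the parameter. -/
theorem differentiableOn_integral_of_locally_dominated {α : Type*} [MeasurableSpace α]
    {μ : Measure α} {F : ℂ → α → ℂ} {Ω : Set ℂ} (hΩ : IsOpen Ω)
    (hmeas : ∀ z ∈ Ω, AEStronglyMeasurable (F z) μ)
    (hd : ∀ a, DifferentiableOn ℂ (fun z => F z a) Ω)
    (hb : ∀ z ∈ Ω, ∃ t ∈ 𝓝 z, ∃ b : α → ℝ, Integrable b μ ∧ ∀ w ∈ t, ∀ a, ‖F w a‖ ≤ b a) :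
    DifferentiableOn ℂ (fun z => ∫ a, F z a ∂μ) Ω := by
  intro z hz
  obtain ⟨t, ht, b, hbi, hbt⟩ := hb z hz
  obtain ⟨ε, hε, hball⟩ := Metric.mem_nhds_iff.1 (inter_mem ht (hΩ.mem_nhds hz))
  have hsub : ∀ w ∈ Metric.ball z (ε / 2), Metric.closedBall w (ε / 4) ⊆ Metric.ball z ε := by
    intro w hw y hy
    rw [Metric.mem_ball] at *
    rw [Metric.mem_closedBall] at hy
    linarith [dist_triangle y w z]
  have hderiv : ∀ a, ∀ w ∈ Metric.ball z (ε / 2),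
      HasDerivAt (fun z => F z a) (deriv (fun z => F z a) w) w := by
    intro a w hw
    have hwΩ : w ∈ Ω := (hball (hsub w hw (Metric.mem_closedBall_self (by positivity)))).2
    exact ((hd a w hwΩ).differentiableAt (hΩ.mem_nhds hwΩ)).hasDerivAt
  have hmeas' : AEStronglyMeasurable (fun a => deriv (fun z => F z a) z) μ := by
    let w : ℕ → ℂ := fun n => z + ((ε / 2 * ((n : ℝ) + 1)⁻¹ * (1 / 2) : ℝ) : ℂ)
    have hwz : ∀ n, w n - z = ((ε / 2 * ((n : ℝ) + 1)⁻¹ * (1 / 2) : ℝ) : ℂ) := fun n => by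
      simp [w]
    have hwpos : ∀ n : ℕ, 0 < ε / 2 * ((n : ℝ) + 1)⁻¹ * (1 / 2) := fun n => by positivity
    have hwlt : ∀ n : ℕ, ε / 2 * ((n : ℝ) + 1)⁻¹ * (1 / 2) < ε := fun n => by
      have : ((n : ℝ) + 1)⁻¹ ≤ 1 := inv_le_one_of_one_le₀ (by linarith [n.cast_nonneg (α := ℝ)])
      nlinarith
    have hwΩ : ∀ n, w n ∈ Ω := fun n => by
      refine (hball ?_).2
      rw [Metric.mem_ball, dist_eq_norm, hwz, Complex.norm_real, Real.norm_of_nonneg (hwpos n).le]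
      exact hwlt n
    have hwne : ∀ n, w n ≠ z := fun n h => by
      have := hwz n
      rw [h, sub_self] at this
      exact (hwpos n).ne (by exact_mod_cast this)
    have hwt : Tendsto w atTop (𝓝[≠] z) := by
      refine tendsto_nhdsWithin_iff.2 ⟨?_, Eventually.of_forall hwne⟩
      have h1 : Tendsto (fun n : ℕ => ε / 2 * ((n : ℝ) + 1)⁻¹ * (1 / 2)) atTop (𝓝 0) := by
        have := tendsto_one_div_add_atTop_nhds_zero_nat (𝕜 := ℝ)
        have h := (this.const_mul (ε / 2)).mul_const (1 / 2 : ℝ)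
        rw [mul_zero, zero_mul] at h
        simpa only [one_div] using h
      have h2 := (Complex.continuous_ofReal.tendsto 0).comp h1
      simpa [w] using h2.const_add z
    refine aestronglyMeasurable_of_tendsto_ae atTop
      (f := fun n a => slope (fun z => F z a) z (w n)) (fun n => ?_)
      (Eventually.of_forall fun a => ?_)
    · simp only [slope_def_module]
      exact ((hmeas _ (hwΩ n)).sub (hmeas _ hz)).const_smul (w n - z)⁻¹
    · exact (hasDerivAt_iff_tendsto_slope.1
        (hderiv a z (Metric.mem_ball_self (by positivity)))).comp hwt
  refine (hasDerivAt_integral_of_dominated_loc_of_deriv_le (F := F)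
    (F' := fun w a => deriv (fun z => F z a) w)
    (bound := fun a => b a / (ε / 4)) (Metric.ball_mem_nhds z (half_pos hε))
    ?_ ?_ hmeas' ?_ (hbi.div_const _)
    (Eventually.of_forall hderiv)).2.differentiableAt.differentiableWithinAt
  · filter_upwards [hΩ.mem_nhds hz] with w hw using hmeas w hw
  · exact hbi.mono' (hmeas z hz)
      (Eventually.of_forall fun a => hbt z (hball (Metric.mem_ball_self hε)).1 a)
  · refine Eventually.of_forall fun a w hw => ?_
    refine Complex.norm_deriv_le_of_forall_mem_sphere_norm_le (by positivity) ?_ ?_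
    · refine DifferentiableOn.diffContOnCl ?_
      rw [closure_ball _ (by positivity)]
      exact (hd a).mono fun y hy => (hball (hsub w hw hy)).2
    · intro y hy
      exact hbt y (hball (hsub w hw (Metric.sphere_subset_closedBall hy))).1 a

/-! ### The outgoing fundamental solution -/

/-- The function `(s² - 2 * i)^(-1/2)`. -/
def outgoingWeight (s : ℝ) : ℂ := Complex.exp (-Complex.log ((s : ℂ) ^ 2 - 2 * Complex.I) / 2)

theorem outgoing_base_mem_slitPlane (s : ℝ) :
    (s : ℂ) ^ 2 - 2 * Complex.I ∈ Complex.slitPlane := by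
  right
  have : ((s : ℂ) ^ 2).im = 0 := by rw [← Complex.ofReal_pow]; exact Complex.ofReal_im _
  simp [this]

theorem continuous_outgoingWeight : Continuous outgoingWeight := by
  unfold outgoingWeight
  refine Complex.continuous_exp.comp ((Continuous.neg ?_).div_const _)
  exact Continuous.clog (by fun_prop) outgoing_base_mem_slitPlane

theorem norm_outgoingWeight_sq (s : ℝ) :
    ‖outgoingWeight s‖ ^ 2 = ‖(s : ℂ) ^ 2 - 2 * Complex.I‖⁻¹ := by
  have h0 := Complex.slitPlane_ne_zero (outgoing_base_mem_slitPlane s)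
  rw [← norm_pow, outgoingWeight, ← Complex.exp_nat_mul]
  have : ((2 : ℕ) : ℂ) * (-Complex.log ((s : ℂ) ^ 2 - 2 * Complex.I) / 2)
      = -Complex.log ((s : ℂ) ^ 2 - 2 * Complex.I) := by push_cast; ring
  rw [this, Complex.exp_neg, Complex.exp_log h0, norm_inv]

theorem norm_outgoingWeight_le_one (s : ℝ) : ‖outgoingWeight s‖ ≤ 1 := by
  have h2 : 2 ≤ ‖(s : ℂ) ^ 2 - 2 * Complex.I‖ := by
    have h := Complex.abs_im_le_norm ((s : ℂ) ^ 2 - 2 * Complex.I)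
    have h3 : ((s : ℂ) ^ 2).im = 0 := by rw [← Complex.ofReal_pow]; exact Complex.ofReal_im _
    simpa [h3] using h
  have h := norm_outgoingWeight_sq s
  have : ‖(s : ℂ) ^ 2 - 2 * Complex.I‖⁻¹ ≤ 1 := inv_le_one_of_one_le₀ (by linarith)
  nlinarith [norm_nonneg (outgoingWeight s)]

theorem hasDerivAt_outgoingWeight (s : ℝ) :
    HasDerivAt outgoingWeight
      (-(s * outgoingWeight s) / ((s : ℂ) ^ 2 - 2 * Complex.I)) s := by
  have h1 : HasDerivAt (fun s : ℝ => (s : ℂ) ^ 2 - 2 * Complex.I) (2 * (s : ℂ)) s := by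
    simpa using ((hasDerivAt_id s).ofReal_comp.pow 2).sub_const (2 * Complex.I)
  have h2 := ((h1.clog_real (outgoing_base_mem_slitPlane s)).neg.div_const 2).cexp
  refine h2.congr_deriv ?_
  unfold outgoingWeight
  have h0 := Complex.slitPlane_ne_zero (outgoing_base_mem_slitPlane s)
  simp only [Pi.neg_apply]
  field_simp

/-- The moments `∫ s^(2 * k) e^(-w * s²) (s² - 2 * i)^(-1/2) ds`. -/
def outgoingMoment (k : ℕ) (w : ℂ) : ℂ :=
  ∫ s : ℝ, (s : ℂ) ^ (2 * k) * Complex.exp (-w * (s : ℂ) ^ 2) * outgoingWeight s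

theorem norm_outgoing_integrand_le (k : ℕ) (w : ℂ) (s : ℝ) :
    ‖(s : ℂ) ^ (2 * k) * Complex.exp (-w * (s : ℂ) ^ 2) * outgoingWeight s‖
      ≤ s ^ (2 * k) * Real.exp (-w.re * s ^ 2) := by
  rw [norm_mul, norm_mul, Complex.norm_exp, norm_pow, Complex.norm_real, Real.norm_eq_abs,
    Even.pow_abs (even_two_mul k)]
  have : (-w * (s : ℂ) ^ 2).re = -w.re * s ^ 2 := by
    rw [← Complex.ofReal_pow, Complex.re_mul_ofReal, Complex.neg_re]
  rw [this]
  refine mul_le_of_le_one_right ?_ (norm_outgoingWeight_le_one s)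
  rw [pow_mul]; positivity

theorem integrable_pow_mul_exp_neg_mul_sq (k : ℕ) {x : ℝ} (hx : 0 < x) :
    Integrable fun s : ℝ => s ^ k * Real.exp (-x * s ^ 2) := by
  have := integrable_rpow_mul_exp_neg_mul_sq hx (s := k) (by
    have : (0 : ℝ) ≤ k := k.cast_nonneg
    linarith)
  simpa using this

theorem continuous_outgoing_integrand (k : ℕ) (w : ℂ) :
    Continuous fun s : ℝ => (s : ℂ) ^ (2 * k) * Complex.exp (-w * (s : ℂ) ^ 2) * outgoingWeight s :=
  Continuous.mul (by fun_prop) continuous_outgoingWeight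

theorem integrable_outgoing_integrand (k : ℕ) {w : ℂ} (hw : 0 < w.re) :
    Integrable fun s : ℝ =>
      (s : ℂ) ^ (2 * k) * Complex.exp (-w * (s : ℂ) ^ 2) * outgoingWeight s :=
  (integrable_pow_mul_exp_neg_mul_sq (2 * k) hw).mono'
    (continuous_outgoing_integrand k w).aestronglyMeasurable
    (Eventually.of_forall (norm_outgoing_integrand_le k w))

theorem hasDerivAt_outgoingMoment (k : ℕ) {w : ℂ} (hw : 0 < w.re) :
    HasDerivAt (outgoingMoment k) (-outgoingMoment (k + 1) w) w := by
  have hs : {z : ℂ | w.re / 2 < z.re} ∈ 𝓝 w :=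
    (isOpen_lt continuous_const Complex.continuous_re).mem_nhds (by simp; linarith)
  have h := (hasDerivAt_integral_of_dominated_loc_of_deriv_le (μ := (volume : Measure ℝ))
    (F := fun w s => (s : ℂ) ^ (2 * k) * Complex.exp (-w * (s : ℂ) ^ 2) * outgoingWeight s)
    (F' := fun w s =>
      -((s : ℂ) ^ (2 * (k + 1)) * Complex.exp (-w * (s : ℂ) ^ 2) * outgoingWeight s))
    (bound := fun s => s ^ (2 * (k + 1)) * Real.exp (-(w.re / 2) * s ^ 2)) hs
    (Eventually.of_forall fun z => (continuous_outgoing_integrand k z).aestronglyMeasurable)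
    (integrable_outgoing_integrand k hw)
    (continuous_outgoing_integrand (k + 1) w).neg.aestronglyMeasurable
    (Eventually.of_forall fun s z hz => ?_)
    (integrable_pow_mul_exp_neg_mul_sq _ (by linarith))
    (Eventually.of_forall fun s z hz => ?_)).2
  · rw [integral_neg] at h
    exact h
  · rw [norm_neg]
    refine (norm_outgoing_integrand_le (k + 1) z s).trans ?_
    refine mul_le_mul_of_nonneg_left (Real.exp_le_exp.2 ?_) (by rw [pow_mul]; positivity)
    have : w.re / 2 < z.re := hz
    nlinarith [sq_nonneg s]
  · have h1 : HasDerivAt (fun w : ℂ => -w * (s : ℂ) ^ 2) (-(s : ℂ) ^ 2) z := by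
      simpa using (hasDerivAt_id z).neg.mul_const ((s : ℂ) ^ 2)
    refine ((h1.cexp.const_mul ((s : ℂ) ^ (2 * k))).mul_const (outgoingWeight s)).congr_deriv ?_
    ring

/-- The constants in the bounds for `outgoingMoment`. -/
def momentBound (k : ℕ) : ℝ := ∫ s : ℝ, s ^ (2 * k) * Real.exp (-s ^ 2)

theorem momentBound_nonneg (k : ℕ) : 0 ≤ momentBound k :=
  integral_nonneg fun s => by
    simp only [Pi.zero_apply]
    rw [pow_mul]; positivity

theorem norm_outgoingMoment_le (k : ℕ) {w : ℂ} (hw : 0 < w.re) :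
    w.re ^ k * √w.re * ‖outgoingMoment k w‖ ≤ momentBound k := by
  have h1 : ‖outgoingMoment k w‖ ≤ ∫ s : ℝ, s ^ (2 * k) * Real.exp (-w.re * s ^ 2) :=
    norm_integral_le_of_norm_le (integrable_pow_mul_exp_neg_mul_sq (2 * k) hw)
      (Eventually.of_forall (norm_outgoing_integrand_le k w))
  have h2 := Measure.integral_comp_mul_left
    (fun s : ℝ => s ^ (2 * k) * Real.exp (-s ^ 2)) (√w.re)
  have hs : 0 < √w.re := Real.sqrt_pos.2 hw
  have h3 : ∀ s : ℝ, (√w.re * s) ^ (2 * k) * Real.exp (-(√w.re * s) ^ 2)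
      = w.re ^ k * (s ^ (2 * k) * Real.exp (-w.re * s ^ 2)) := by
    intro s
    rw [mul_pow, mul_pow, pow_mul, Real.sq_sqrt hw.le]
    ring_nf
  simp only [h3] at h2
  rw [integral_const_mul, abs_of_pos (inv_pos.2 hs), smul_eq_mul] at h2
  calc w.re ^ k * √w.re * ‖outgoingMoment k w‖
      ≤ w.re ^ k * √w.re * ∫ s : ℝ, s ^ (2 * k) * Real.exp (-w.re * s ^ 2) := by gcongr
    _ = √w.re * (w.re ^ k * ∫ s : ℝ, s ^ (2 * k) * Real.exp (-w.re * s ^ 2)) := by ring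
    _ = momentBound k := by rw [h2, momentBound]; field_simp

theorem outgoingMoment_relation {w : ℂ} (hw : 0 < w.re) :
    w * outgoingMoment 2 w - 2 * Complex.I * w * outgoingMoment 1 w
      + Complex.I * outgoingMoment 0 w - outgoingMoment 1 w = 0 := by
  let e : ℕ → ℝ → ℂ := fun k s =>
    (s : ℂ) ^ (2 * k) * Complex.exp (-w * (s : ℂ) ^ 2) * outgoingWeight s
  let f : ℝ → ℂ := fun s => s * ((s : ℂ) ^ 2 - 2 * Complex.I) *
    (Complex.exp (-w * (s : ℂ) ^ 2) * outgoingWeight s)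
  let f' : ℝ → ℂ := fun s => 2 * e 1 s - 2 * Complex.I * e 0 s - 2 * w * e 2 s
    + 4 * Complex.I * w * e 1 s
  have he : ∀ k, Integrable (e k) := fun k => integrable_outgoing_integrand k hw
  have hf' : Integrable f' :=
    ((((he 1).const_mul _).sub ((he 0).const_mul _)).sub ((he 2).const_mul _)).add
      ((he 1).const_mul _)
  have hf : Integrable f := by
    have hb : Integrable fun s : ℝ => s ^ 0 * Real.exp (-w.re * s ^ 2)
        + s ^ 4 * Real.exp (-w.re * s ^ 2)
        + 2 * (s ^ 0 * Real.exp (-w.re * s ^ 2) + s ^ 2 * Real.exp (-w.re * s ^ 2)) :=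
      ((integrable_pow_mul_exp_neg_mul_sq 0 hw).add (integrable_pow_mul_exp_neg_mul_sq 4 hw)).add
      (((integrable_pow_mul_exp_neg_mul_sq 0 hw).add
        (integrable_pow_mul_exp_neg_mul_sq 2 hw)).const_mul 2)
    refine hb.mono' ?_ (Eventually.of_forall fun s => ?_)
    · exact (Continuous.mul (by fun_prop)
        (Continuous.mul (by fun_prop) continuous_outgoingWeight)).aestronglyMeasurable
    · have h1 := norm_outgoing_integrand_le 0 w s
      simp only [mul_zero, pow_zero, one_mul] at h1 ⊢
      have h2 : ‖(s : ℂ) * ((s : ℂ) ^ 2 - 2 * Complex.I)‖ ≤ |s| * (s ^ 2 + 2) := by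
        rw [norm_mul, Complex.norm_real, Real.norm_eq_abs]
        refine mul_le_mul_of_nonneg_left ((norm_sub_le _ _).trans ?_) (abs_nonneg s)
        simp
      have h3 : |s| * (s ^ 2 + 2) ≤ 1 + s ^ 4 + 2 * (1 + s ^ 2) := by
        have := sq_abs s
        have h4 : s ^ 4 = |s| ^ 4 := by rw [Even.pow_abs (by decide)]
        rw [← this, h4]
        nlinarith [sq_nonneg (|s| - 1), sq_nonneg (|s| ^ 2 - |s|), abs_nonneg s]
      calc ‖f s‖ = ‖(s : ℂ) * ((s : ℂ) ^ 2 - 2 * Complex.I)‖ *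
          ‖Complex.exp (-w * (s : ℂ) ^ 2) * outgoingWeight s‖ := norm_mul _ _
        _ ≤ (1 + s ^ 4 + 2 * (1 + s ^ 2)) * Real.exp (-w.re * s ^ 2) :=
          mul_le_mul (h2.trans h3) h1 (norm_nonneg _) (by positivity)
        _ = _ := by ring
  have hderiv : ∀ s, HasDerivAt f (f' s) s := by
    intro s
    have h0 := Complex.slitPlane_ne_zero (outgoing_base_mem_slitPlane s)
    have hid : HasDerivAt (fun s : ℝ => (s : ℂ)) 1 s := by
      simpa using (hasDerivAt_id s).ofReal_comp
    have h1 := (hid.mul ((hid.pow 2).sub_const (2 * Complex.I))).mul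
      ((((hid.pow 2).const_mul (-w)).cexp).mul (hasDerivAt_outgoingWeight s))
    refine h1.congr_deriv ?_
    simp only [f', e, Pi.mul_apply, Pi.pow_apply]
    field_simp
    push_cast
    ring_nf
  have h0 := integral_eq_zero_of_hasDerivAt_of_integrable hderiv hf' hf
  have h1 : ∫ s, f' s = 2 * outgoingMoment 1 w - 2 * Complex.I * outgoingMoment 0 w
      - 2 * w * outgoingMoment 2 w + 4 * Complex.I * w * outgoingMoment 1 w := by
    have i1 : Integrable fun s => 2 * e 1 s - 2 * Complex.I * e 0 s :=
      ((he 1).const_mul _).sub ((he 0).const_mul _)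
    have i2 : Integrable fun s => 2 * e 1 s - 2 * Complex.I * e 0 s - 2 * w * e 2 s :=
      i1.sub ((he 2).const_mul _)
    simp only [f']
    rw [integral_add i2 ((he 1).const_mul _), integral_sub i1 ((he 2).const_mul _),
      integral_sub ((he 1).const_mul _) ((he 0).const_mul _)]
    simp only [integral_const_mul]
    rfl
  rw [h0] at h1
  linear_combination h1 / 2

/-- The outgoing solution of the Bessel equation of order zero on the right half-plane; it is a
multiple of the Hankel function `H₀⁽¹⁾`. -/
def outgoing (w : ℂ) : ℂ := Complex.exp (Complex.I * w) * outgoingMoment 0 w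

/-- The derivative of `outgoing`. -/
def outgoingDeriv (w : ℂ) : ℂ :=
  Complex.exp (Complex.I * w) * (Complex.I * outgoingMoment 0 w - outgoingMoment 1 w)

theorem hasDerivAt_outgoing {w : ℂ} (hw : 0 < w.re) :
    HasDerivAt outgoing (outgoingDeriv w) w := by
  have h := (((hasDerivAt_id w).const_mul Complex.I).cexp).mul (hasDerivAt_outgoingMoment 0 hw)
  refine h.congr_deriv ?_
  simp only [outgoingDeriv, id, zero_add]
  ring

theorem hasDerivAt_mul_outgoingDeriv {w : ℂ} (hw : 0 < w.re) :
    HasDerivAt (fun z => z * outgoingDeriv z) (-w * outgoing w) w := by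
  have h := (hasDerivAt_id w).mul ((((hasDerivAt_id w).const_mul Complex.I).cexp).mul
    (((hasDerivAt_outgoingMoment 0 hw).const_mul Complex.I).sub (hasDerivAt_outgoingMoment 1 hw)))
  refine h.congr_deriv ?_
  have hr := outgoingMoment_relation hw
  simp only [outgoing, id, zero_add, Pi.mul_apply, Pi.sub_apply, one_add_one_eq_two] at hr ⊢
  linear_combination Complex.exp (Complex.I * w) * hr
    + Complex.exp (Complex.I * w) * w * outgoingMoment 0 w * Complex.I_sq

theorem norm_exp_I_mul (w : ℂ) : ‖Complex.exp (Complex.I * w)‖ = Real.exp (-w.im) := by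
  rw [Complex.norm_exp]; simp

theorem norm_outgoing_le {w : ℂ} (hw : 0 < w.re) :
    √w.re * ‖outgoing w‖ ≤ momentBound 0 * Real.exp (-w.im) := by
  have h := norm_outgoingMoment_le 0 hw
  rw [outgoing, norm_mul, norm_exp_I_mul]
  rw [pow_zero, one_mul] at h
  nlinarith [Real.exp_pos (-w.im)]

theorem norm_outgoingDeriv_sub_le {w : ℂ} (hw : 0 < w.re) :
    w.re * √w.re * ‖outgoingDeriv w - Complex.I * outgoing w‖
      ≤ momentBound 1 * Real.exp (-w.im) := by
  have h := norm_outgoingMoment_le 1 hw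
  have e : outgoingDeriv w - Complex.I * outgoing w
      = Complex.exp (Complex.I * w) * -outgoingMoment 1 w := by
    rw [outgoingDeriv, outgoing]; ring
  rw [e, norm_mul, norm_exp_I_mul, norm_neg]
  rw [pow_one] at h
  nlinarith [Real.exp_pos (-w.im)]

/-- The constant governing the singularity of `outgoing` at the origin. -/
def outgoingResidue : ℝ := ∫ t : ℝ, |t| * Real.exp (-t ^ 2)

theorem integrable_abs_mul_exp_neg_sq : Integrable fun t : ℝ => |t| * Real.exp (-t ^ 2) := by
  have := (integrable_pow_mul_exp_neg_mul_sq 1 one_pos).norm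
  simpa using this

theorem outgoingResidue_pos : 0 < outgoingResidue := by
  refine (integral_pos_iff_support_of_nonneg (fun t => by positivity)
    integrable_abs_mul_exp_neg_sq).2 ?_
  have : Function.support (fun t : ℝ => |t| * Real.exp (-t ^ 2)) = {0}ᶜ := by
    ext t; simp
  rw [this, measure_compl (measurableSet_singleton 0) (by simp)]
  simp

theorem sqrt_inv_mul_outgoingWeight {x t : ℝ} (hx : 0 < x) :
    outgoingWeight ((√x)⁻¹ * t)
      = √x * Complex.exp (-Complex.log ((t : ℂ) ^ 2 - 2 * Complex.I * x) / 2) := by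
  have hx0 : (x : ℂ) ≠ 0 := by exact_mod_cast hx.ne'
  have hz : (t : ℂ) ^ 2 - 2 * Complex.I * x ≠ 0 := by
    intro h
    have := congrArg Complex.im h
    have h3 : ((t : ℂ) ^ 2).im = 0 := by rw [← Complex.ofReal_pow]; exact Complex.ofReal_im _
    simp [h3, hx.ne'] at this
  have e : ((((√x)⁻¹ * t : ℝ) : ℂ)) ^ 2 - 2 * Complex.I
      = ((x⁻¹ : ℝ) : ℂ) * ((t : ℂ) ^ 2 - 2 * Complex.I * x) := by
    have h2 : (((√x)⁻¹ * t : ℝ)) ^ 2 = x⁻¹ * t ^ 2 := by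
      rw [mul_pow, inv_pow, Real.sq_sqrt hx.le]
    rw [← Complex.ofReal_pow, h2]
    push_cast
    field_simp
  rw [outgoingWeight, e, Complex.log_ofReal_mul (inv_pos.2 hx) hz, Real.log_inv]
  have e2 : (√x : ℂ) = Complex.exp ((Real.log x : ℝ) / 2) := by
    have : √x = Real.exp (Real.log x / 2) := by
      rw [Real.sqrt_eq_rpow, Real.rpow_def_of_pos hx]; ring_nf
    rw [this]; push_cast; rfl
  rw [e2, ← Complex.exp_add]
  congr 1
  push_cast
  ring

theorem tendsto_mul_outgoingMoment_one :
    Tendsto (fun x : ℝ => (x : ℂ) * outgoingMoment 1 x) (𝓝[>] 0) (𝓝 (outgoingResidue : ℂ)) := by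
  let g : ℝ → ℝ → ℂ := fun x t => (t : ℂ) ^ 2 * Complex.exp (-(t : ℂ) ^ 2) *
    Complex.exp (-Complex.log ((t : ℂ) ^ 2 - 2 * Complex.I * x) / 2)
  have hg : ∀ x : ℝ, 0 < x → ∀ t : ℝ, g x t = ((√x)⁻¹ : ℂ) *
      ((t : ℂ) ^ 2 * Complex.exp (-(t : ℂ) ^ 2) * outgoingWeight ((√x)⁻¹ * t)) := by
    intro x hx t
    have : (√x : ℂ) ≠ 0 := by exact_mod_cast (Real.sqrt_pos.2 hx).ne'
    rw [sqrt_inv_mul_outgoingWeight hx]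
    simp only [g]
    field_simp
  have heq : ∀ x : ℝ, 0 < x → (x : ℂ) * outgoingMoment 1 x = ∫ t, g x t := by
    intro x hx
    have hs : 0 < √x := Real.sqrt_pos.2 hx
    have h := Measure.integral_comp_mul_left (fun s : ℝ =>
      (s : ℂ) ^ (2 * 1) * Complex.exp (-(x : ℂ) * (s : ℂ) ^ 2) * outgoingWeight s) (√x)⁻¹
    rw [inv_inv, abs_of_pos hs] at h
    have h1 : outgoingMoment 1 x = ((√x)⁻¹ : ℂ) * ∫ t : ℝ, (((√x)⁻¹ * t : ℝ) : ℂ) ^ (2 * 1) *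
        Complex.exp (-(x : ℂ) * (((√x)⁻¹ * t : ℝ) : ℂ) ^ 2) * outgoingWeight ((√x)⁻¹ * t) := by
      rw [h, outgoingMoment, Complex.real_smul]
      have : (√x : ℂ) ≠ 0 := by exact_mod_cast hs.ne'
      field_simp
    rw [h1, ← mul_assoc, ← integral_const_mul]
    refine integral_congr_ae (Eventually.of_forall fun t => ?_)
    simp only [hg x hx]
    have h2 : (((√x)⁻¹ * t : ℝ) : ℂ) ^ 2 = (x : ℂ)⁻¹ * (t : ℂ) ^ 2 := by
      rw [← Complex.ofReal_pow, mul_pow, inv_pow, Real.sq_sqrt hx.le]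
      push_cast; rfl
    have hx0 : (x : ℂ) ≠ 0 := by exact_mod_cast hx.ne'
    rw [mul_one, h2]
    have h3 : -(x : ℂ) * ((x : ℂ)⁻¹ * (t : ℂ) ^ 2) = -(t : ℂ) ^ 2 := by field_simp
    rw [h3]
    field_simp
  have hlim : Tendsto (fun x : ℝ => ∫ t, g x t) (𝓝[>] 0)
      (𝓝 (∫ t : ℝ, ((|t| * Real.exp (-t ^ 2) : ℝ) : ℂ))) := by
    refine tendsto_integral_filter_of_dominated_convergence
      (fun t => |t| * Real.exp (-t ^ 2)) ?_ ?_ integrable_abs_mul_exp_neg_sq ?_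
    · filter_upwards [self_mem_nhdsWithin] with x hx
      simp only [funext (hg x hx)]
      refine (Continuous.mul (by fun_prop) (Continuous.mul (by fun_prop) ?_)).aestronglyMeasurable
      exact continuous_outgoingWeight.comp (by fun_prop)
    · filter_upwards [self_mem_nhdsWithin] with x hx
      refine Eventually.of_forall fun t => ?_
      have hx' : 0 < x := hx
      have hz : (t : ℂ) ^ 2 - 2 * Complex.I * x ≠ 0 := by
        intro h
        have := congrArg Complex.im h
        have h3 : ((t : ℂ) ^ 2).im = 0 := by rw [← Complex.ofReal_pow]; exact Complex.ofReal_im _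
        simp [h3, hx'.ne'] at this
      have h1 : ‖Complex.exp (-Complex.log ((t : ℂ) ^ 2 - 2 * Complex.I * x) / 2)‖ ^ 2
          = ‖(t : ℂ) ^ 2 - 2 * Complex.I * x‖⁻¹ := by
        rw [← norm_pow, ← Complex.exp_nat_mul]
        have : ((2 : ℕ) : ℂ) * (-Complex.log ((t : ℂ) ^ 2 - 2 * Complex.I * x) / 2)
            = -Complex.log ((t : ℂ) ^ 2 - 2 * Complex.I * x) := by push_cast; ring
        rw [this, Complex.exp_neg, Complex.exp_log hz, norm_inv]
      have h2 : t ^ 2 ≤ ‖(t : ℂ) ^ 2 - 2 * Complex.I * x‖ := by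
        have h := Complex.re_le_norm ((t : ℂ) ^ 2 - 2 * Complex.I * x)
        have h3 : ((t : ℂ) ^ 2).re = t ^ 2 := by
          rw [← Complex.ofReal_pow]; exact Complex.ofReal_re _
        simpa [h3] using h
      set N := ‖Complex.exp (-Complex.log ((t : ℂ) ^ 2 - 2 * Complex.I * x) / 2)‖ with hN
      have h3 : ‖g x t‖ = t ^ 2 * Real.exp (-t ^ 2) * N := by
        simp only [g]
        rw [norm_mul, norm_mul, ← hN, norm_pow, Complex.norm_real, Real.norm_eq_abs, sq_abs,
          ← Complex.ofReal_pow, ← Complex.ofReal_neg, Complex.norm_exp_ofReal]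
      have h4 : |t| * N ≤ 1 := by
        refine abs_le_of_sq_le_sq' ?_ zero_le_one |>.2
        rw [mul_pow, sq_abs, h1, one_pow, ← div_eq_mul_inv]
        exact div_le_one_of_le₀ h2 (norm_nonneg _)
      rw [h3]
      calc t ^ 2 * Real.exp (-t ^ 2) * N = |t| * Real.exp (-t ^ 2) * (|t| * N) := by
            rw [← sq_abs t]; ring
        _ ≤ |t| * Real.exp (-t ^ 2) := mul_le_of_le_one_right (by positivity) h4
    · refine Eventually.of_forall fun t => ?_
      rcases eq_or_ne t 0 with rfl | ht
      · simp [g]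
      have hcont : ContinuousAt (g · t) 0 := by
        refine continuousAt_const.mul (ContinuousAt.cexp (ContinuousAt.div_const
          (ContinuousAt.neg (ContinuousAt.clog (by fun_prop) ?_)) _))
        left
        have h3 : ((t : ℂ) ^ 2).re = t ^ 2 := by
          rw [← Complex.ofReal_pow]; exact Complex.ofReal_re _
        simp only [Complex.ofReal_zero, mul_zero, sub_zero, h3]
        positivity
      have h0 : g 0 t = ((|t| * Real.exp (-t ^ 2) : ℝ) : ℂ) := by
        have ht' : 0 < |t| := abs_pos.2 ht
        have e : (t : ℂ) ^ 2 = ((|t| ^ 2 : ℝ) : ℂ) := by rw [sq_abs]; push_cast; rfl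
        simp only [g, Complex.ofReal_zero, mul_zero, sub_zero]
        rw [e, ← Complex.ofReal_log (by positivity), Real.log_pow]
        have e2 : -((((2 : ℕ) : ℝ) * Real.log |t| : ℝ) : ℂ) / 2
            = ((-Real.log |t| : ℝ) : ℂ) := by
          push_cast; ring
        rw [e2, ← Complex.ofReal_exp, Real.exp_neg, Real.exp_log ht', ← Complex.ofReal_neg,
          ← Complex.ofReal_exp, ← Complex.ofReal_mul, ← Complex.ofReal_mul, sq_abs]
        congr 1
        rw [← sq_abs t]
        field_simp
      rw [← h0]
      exact hcont.tendsto.mono_left nhdsWithin_le_nhds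
  rw [integral_complex_ofReal] at hlim
  refine hlim.congr' ?_
  filter_upwards [self_mem_nhdsWithin] with x hx
  exact (heq x hx).symm

theorem tendsto_mul_outgoingMoment_zero :
    Tendsto (fun x : ℝ => (x : ℂ) * outgoingMoment 0 x) (𝓝[>] 0) (𝓝 0) := by
  have h : Tendsto (fun x : ℝ => √x * momentBound 0) (𝓝[>] 0) (𝓝 0) := by
    have : Tendsto (fun x : ℝ => √x * momentBound 0) (𝓝 0) (𝓝 (√0 * momentBound 0)) :=
      (Real.continuous_sqrt.mul continuous_const).tendsto 0
    rw [Real.sqrt_zero, zero_mul] at this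
    exact this.mono_left nhdsWithin_le_nhds
  refine squeeze_zero_norm' ?_ h
  filter_upwards [self_mem_nhdsWithin] with x hx
  have hx' : 0 < x := hx
  have h1 := norm_outgoingMoment_le 0 (w := x) (by simpa using hx')
  rw [Complex.ofReal_re, pow_zero, one_mul] at h1
  rw [norm_mul, Complex.norm_real, Real.norm_of_nonneg hx'.le]
  calc x * ‖outgoingMoment 0 x‖ = √x * (√x * ‖outgoingMoment 0 x‖) := by
        rw [← mul_assoc, Real.mul_self_sqrt hx'.le]
    _ ≤ √x * momentBound 0 := by gcongr

theorem tendsto_exp_I_mul_nhdsGT_zero :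
    Tendsto (fun x : ℝ => Complex.exp (Complex.I * x)) (𝓝[>] 0) (𝓝 1) := by
  have h : Continuous fun x : ℝ => Complex.exp (Complex.I * x) := by fun_prop
  have h2 := h.tendsto 0
  simp only [Complex.ofReal_zero, mul_zero, Complex.exp_zero] at h2
  exact h2.mono_left nhdsWithin_le_nhds

theorem tendsto_mul_outgoing :
    Tendsto (fun x : ℝ => (x : ℂ) * outgoing x) (𝓝[>] 0) (𝓝 0) := by
  have h := tendsto_exp_I_mul_nhdsGT_zero.mul tendsto_mul_outgoingMoment_zero
  rw [mul_zero] at h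
  refine h.congr fun x => ?_
  rw [outgoing]; ring

theorem tendsto_mul_outgoingDeriv :
    Tendsto (fun x : ℝ => (x : ℂ) * outgoingDeriv x) (𝓝[>] 0) (𝓝 (-outgoingResidue : ℂ)) := by
  have h := tendsto_exp_I_mul_nhdsGT_zero.mul
    ((tendsto_mul_outgoingMoment_zero.const_mul Complex.I).sub tendsto_mul_outgoingMoment_one)
  rw [mul_zero, zero_sub, one_mul] at h
  refine h.congr fun x => ?_
  rw [outgoingDeriv]; ring

/-! ### Circular means -/

theorem hasDerivAt_intervalIntegral_of_continuous {F F' : ℝ → ℝ → ℂ} {a b : ℝ}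
    (hF : Continuous (Function.uncurry F)) (hF' : Continuous (Function.uncurry F'))
    (hd : ∀ r φ, HasDerivAt (fun r => F r φ) (F' r φ) r) (r : ℝ) :
    HasDerivAt (fun r => ∫ φ in a..b, F r φ) (∫ φ in a..b, F' r φ) r := by
  have hK : IsCompact (Metric.closedBall r 1 ×ˢ uIcc a b) :=
    (isCompact_closedBall r 1).prod isCompact_uIcc
  obtain ⟨C, hC⟩ := hK.exists_bound_of_continuousOn hF'.continuousOn
  refine (intervalIntegral.hasDerivAt_integral_of_dominated_loc_of_deriv_le
    (F := F) (F' := F') (bound := fun _ => C) (Metric.closedBall_mem_nhds r one_pos)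
    (Eventually.of_forall fun s => ?_) ?_ ?_ (Eventually.of_forall fun φ hφ s hs => ?_)
    intervalIntegrable_const (Eventually.of_forall fun φ _ s _ => hd s φ)).2
  · exact (hF.comp (by fun_prop : Continuous fun φ => (s, φ))).aestronglyMeasurable
  · exact (hF.comp (by fun_prop : Continuous fun φ => (r, φ))).intervalIntegrable _ _
  · exact (hF'.comp (by fun_prop : Continuous fun φ => (r, φ))).aestronglyMeasurable
  · exact hC (s, φ) ⟨hs, uIoc_subset_uIcc hφ⟩

/-- The unit vector with polar angle `φ`. -/
def circleDir (φ : ℝ) : R2 := !₂[Real.cos φ, Real.sin φ]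

/-- The derivative of `circleDir`. -/
def circleTangent (φ : ℝ) : R2 := !₂[-Real.sin φ, Real.cos φ]

theorem circleDir_eq (φ : ℝ) : circleDir φ = Real.cos φ • EuclideanSpace.single (0 : Fin 2) (1 : ℝ)
    + Real.sin φ • EuclideanSpace.single (1 : Fin 2) (1 : ℝ) := by
  ext i; fin_cases i <;> simp [circleDir]

theorem circleTangent_eq (φ : ℝ) :
    circleTangent φ = (-Real.sin φ) • EuclideanSpace.single (0 : Fin 2) (1 : ℝ)
      + Real.cos φ • EuclideanSpace.single (1 : Fin 2) (1 : ℝ) := by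
  ext i; fin_cases i <;> simp [circleTangent]

theorem continuous_circleDir : Continuous circleDir := by
  rw [funext circleDir_eq]; fun_prop

theorem continuous_circleTangent : Continuous circleTangent := by
  rw [funext circleTangent_eq]; fun_prop

theorem hasDerivAt_circleDir (φ : ℝ) : HasDerivAt circleDir (circleTangent φ) φ := by
  rw [funext circleDir_eq, circleTangent_eq]
  exact ((Real.hasDerivAt_cos φ).smul_const _).add ((Real.hasDerivAt_sin φ).smul_const _)

theorem hasDerivAt_circleTangent (φ : ℝ) : HasDerivAt circleTangent (-circleDir φ) φ := by
  rw [funext circleTangent_eq, circleDir_eq, neg_add, ← neg_smul, ← neg_smul]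
  exact ((Real.hasDerivAt_sin φ).neg.smul_const _).add ((Real.hasDerivAt_cos φ).smul_const _)

theorem norm_circleDir (φ : ℝ) : ‖circleDir φ‖ = 1 := by
  rw [EuclideanSpace.norm_eq, Real.sqrt_eq_one]
  simp [circleDir, Fin.sum_univ_two]

theorem laplacian2_eq {v : R2 → ℂ} {y : R2} (hv : ContDiffAt ℝ 2 v y) :
    laplacian2 v y = ∑ i : Fin 2, fderiv ℝ (fderiv ℝ v) y (EuclideanSpace.single i 1)
      (EuclideanSpace.single i 1) := by
  have hd : DifferentiableAt ℝ (fderiv ℝ v) y :=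
    (hv.fderiv_right (m := 1) (by norm_num)).differentiableAt (by norm_num)
  unfold laplacian2
  refine Finset.sum_congr rfl fun i _ => ?_
  rw [fderiv_clm_apply hd (differentiableAt_const _)]
  simp

theorem laplacian2_eq_circle {v : R2 → ℂ} {y : R2} (hv : ContDiffAt ℝ 2 v y) (φ : ℝ) :
    laplacian2 v y = fderiv ℝ (fderiv ℝ v) y (circleDir φ) (circleDir φ)
      + fderiv ℝ (fderiv ℝ v) y (circleTangent φ) (circleTangent φ) := by
  rw [laplacian2_eq hv, circleDir_eq, circleTangent_eq, Fin.sum_univ_two]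
  simp only [map_add, map_smul, add_apply, smul_apply,
    Complex.real_smul]
  have h : (Real.cos φ : ℂ) ^ 2 + (Real.sin φ : ℂ) ^ 2 = 1 := by
    exact_mod_cast Real.cos_sq_add_sin_sq φ
  push_cast at h ⊢
  linear_combination (-fderiv ℝ (fderiv ℝ v) y (EuclideanSpace.single 0 1)
    (EuclideanSpace.single 0 1) - fderiv ℝ (fderiv ℝ v) y (EuclideanSpace.single 1 1)
    (EuclideanSpace.single 1 1)) * h

theorem continuous_fderiv_of_contDiff_two {v : R2 → ℂ} (hv : ContDiff ℝ 2 v) :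
    Continuous (fderiv ℝ v) :=
  hv.continuous_fderiv (by norm_num)

theorem continuous_fderiv_fderiv_of_contDiff_two {v : R2 → ℂ} (hv : ContDiff ℝ 2 v) :
    Continuous (fderiv ℝ (fderiv ℝ v)) :=
  (hv.fderiv_right (m := 1) (by norm_num)).continuous_fderiv (by norm_num)

theorem continuous_laplacian2 {v : R2 → ℂ} (hv : ContDiff ℝ 2 v) : Continuous (laplacian2 v) := by
  have : laplacian2 v = fun y => ∑ i : Fin 2,
      fderiv ℝ (fderiv ℝ v) y (EuclideanSpace.single i 1) (EuclideanSpace.single i 1) :=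
    funext fun y => laplacian2_eq hv.contDiffAt
  rw [this]
  have := continuous_fderiv_fderiv_of_contDiff_two hv
  fun_prop

theorem hasDerivAt_add_smul_circleDir (x : R2) (r φ : ℝ) :
    HasDerivAt (fun r : ℝ => x + r • circleDir φ) (circleDir φ) r := by
  simpa using ((hasDerivAt_id r).smul_const (circleDir φ)).const_add x

/-- The first radial derivative of the circular mean of a `C²` function. -/
theorem hasDerivAt_circularMean {v : R2 → ℂ} (hv : ContDiff ℝ 2 v) (x : R2) (r : ℝ) :
    HasDerivAt (fun r => ∫ φ in -π..π, v (x + r • circleDir φ))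
      (∫ φ in -π..π, fderiv ℝ v (x + r • circleDir φ) (circleDir φ)) r := by
  have h1 := continuous_fderiv_of_contDiff_two hv
  have h0 := hv.continuous
  have hc := continuous_circleDir
  refine hasDerivAt_intervalIntegral_of_continuous
    (F := fun r φ => v (x + r • circleDir φ))
    (F' := fun r φ => fderiv ℝ v (x + r • circleDir φ) (circleDir φ)) ?_ ?_ (fun r φ => ?_) r
  · simp only [Function.uncurry_def]; fun_prop
  · simp only [Function.uncurry_def]; fun_prop
  · exact ((hv.differentiable (by norm_num)).differentiableAt.hasFDerivAt).comp_hasDerivAt r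
      (hasDerivAt_add_smul_circleDir x r φ)

/-- The second radial derivative of the circular mean of a `C²` function. -/
theorem hasDerivAt_circularMean_deriv {v : R2 → ℂ} (hv : ContDiff ℝ 2 v) (x : R2) (r : ℝ) :
    HasDerivAt (fun r => ∫ φ in -π..π, fderiv ℝ v (x + r • circleDir φ) (circleDir φ))
      (∫ φ in -π..π,
        fderiv ℝ (fderiv ℝ v) (x + r • circleDir φ) (circleDir φ) (circleDir φ)) r := by
  have h1 := continuous_fderiv_of_contDiff_two hv
  have h2 := continuous_fderiv_fderiv_of_contDiff_two hv
  have hc := continuous_circleDir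
  refine hasDerivAt_intervalIntegral_of_continuous
    (F := fun r φ => fderiv ℝ v (x + r • circleDir φ) (circleDir φ))
    (F' := fun r φ => fderiv ℝ (fderiv ℝ v) (x + r • circleDir φ) (circleDir φ) (circleDir φ))
    ?_ ?_ (fun r φ => ?_) r
  · simp only [Function.uncurry_def]; fun_prop
  · simp only [Function.uncurry_def]; fun_prop
  · have hd : Differentiable ℝ (fderiv ℝ v) :=
      (hv.fderiv_right (m := 1) (by norm_num)).differentiable (by norm_num)
    have h := (hd (x + r • circleDir φ)).hasFDerivAt.comp_hasDerivAt r
      (hasDerivAt_add_smul_circleDir x r φ)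
    simpa using h.clm_apply (hasDerivAt_const r (circleDir φ))

/-- The Darboux equation for circular means. -/
theorem circularMean_darboux {v : R2 → ℂ} (hv : ContDiff ℝ 2 v) (x : R2) (r : ℝ) :
    (∫ φ in -π..π, fderiv ℝ v (x + r • circleDir φ) (circleDir φ))
      + r * (∫ φ in -π..π,
        fderiv ℝ (fderiv ℝ v) (x + r • circleDir φ) (circleDir φ) (circleDir φ))
      = r * ∫ φ in -π..π, laplacian2 v (x + r • circleDir φ) := by
  have h1 := continuous_fderiv_of_contDiff_two hv
  have h2 := continuous_fderiv_fderiv_of_contDiff_two hv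
  have hc := continuous_circleDir
  have ht := continuous_circleTangent
  have hd : Differentiable ℝ (fderiv ℝ v) :=
    (hv.fderiv_right (m := 1) (by norm_num)).differentiable (by norm_num)
  have hA : Continuous fun φ =>
      fderiv ℝ (fderiv ℝ v) (x + r • circleDir φ) (circleDir φ) (circleDir φ) := by fun_prop
  have hB : Continuous fun φ =>
      fderiv ℝ (fderiv ℝ v) (x + r • circleDir φ) (circleTangent φ) (circleTangent φ) := by fun_prop
  have hD : Continuous fun φ => fderiv ℝ v (x + r • circleDir φ) (circleDir φ) := by fun_prop
  have hang : ∀ φ, HasDerivAt (fun φ => fderiv ℝ v (x + r • circleDir φ) (circleTangent φ))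
      ((r : ℂ) * fderiv ℝ (fderiv ℝ v) (x + r • circleDir φ) (circleTangent φ) (circleTangent φ)
        - fderiv ℝ v (x + r • circleDir φ) (circleDir φ)) φ := by
    intro φ
    have hcurve : HasDerivAt (fun φ => x + r • circleDir φ) (r • circleTangent φ) φ :=
      ((hasDerivAt_circleDir φ).const_smul r).const_add x
    have h1 : HasDerivAt (fun φ => fderiv ℝ v (x + r • circleDir φ))
        (fderiv ℝ (fderiv ℝ v) (x + r • circleDir φ) (r • circleTangent φ)) φ :=
      (hd (x + r • circleDir φ)).hasFDerivAt.comp_hasDerivAt φ hcurve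
    refine (h1.clm_apply (hasDerivAt_circleTangent φ)).congr_deriv ?_
    rw [map_smul, map_neg, smul_apply, Complex.real_smul, sub_eq_add_neg]
  have hper : ∫ φ in -π..π, ((r : ℂ) *
      fderiv ℝ (fderiv ℝ v) (x + r • circleDir φ) (circleTangent φ) (circleTangent φ)
        - fderiv ℝ v (x + r • circleDir φ) (circleDir φ)) = 0 := by
    rw [intervalIntegral.integral_eq_sub_of_hasDerivAt (fun φ _ => hang φ)
      ((by fun_prop : Continuous _).intervalIntegrable _ _)]
    simp [circleDir, circleTangent]
  rw [intervalIntegral.integral_sub ((hB.intervalIntegrable _ _).const_mul _)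
    (hD.intervalIntegrable _ _), intervalIntegral.integral_const_mul] at hper
  have hsplit : ∫ φ in -π..π, laplacian2 v (x + r • circleDir φ)
      = (∫ φ in -π..π, fderiv ℝ (fderiv ℝ v) (x + r • circleDir φ) (circleDir φ) (circleDir φ))
      + ∫ φ in -π..π,
        fderiv ℝ (fderiv ℝ v) (x + r • circleDir φ) (circleTangent φ) (circleTangent φ) := by
    rw [← intervalIntegral.integral_add (hA.intervalIntegrable _ _) (hB.intervalIntegrable _ _)]
    exact intervalIntegral.integral_congr fun φ _ => laplacian2_eq_circle hv.contDiffAt φ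
  rw [hsplit]
  linear_combination -hper

/-! ### Polar coordinates -/

theorem integral_eq_polar {G : R2 → ℂ} (hG : Continuous G) (x : R2) {ρ : ℝ}
    (hsupp : ∀ y, ρ < ‖y - x‖ → G y = 0) :
    IntegrableOn (fun r : ℝ => ∫ φ in -π..π, (r : ℂ) * G (x + r • circleDir φ)) (Ioi 0) ∧
    ∫ y, G y = ∫ r in Ioi (0 : ℝ), ∫ φ in -π..π, (r : ℂ) * G (x + r • circleDir φ) := by
  have hc := continuous_circleDir
  let J : ℝ × ℝ → ℂ := fun p => (p.1 : ℂ) * G (x + p.1 • circleDir p.2)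
  have hJ : Continuous J := by fun_prop
  have hintegrable : IntegrableOn J (Ioi 0 ×ˢ Ioo (-π) π) := by
    have h1 : IntegrableOn J (Icc 0 ρ ×ˢ Icc (-π) π) :=
      hJ.continuousOn.integrableOn_compact (isCompact_Icc.prod isCompact_Icc)
    refine h1.of_forall_sdiff_eq_zero (measurableSet_Ioi.prod measurableSet_Ioo) ?_
    rintro ⟨r, φ⟩ ⟨⟨hr, hφ⟩, hn⟩
    have hr0 : 0 < r := hr
    have hrρ : ρ < r := by
      by_contra hcon
      exact hn ⟨⟨hr0.le, not_lt.1 hcon⟩, Ioo_subset_Icc_self hφ⟩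
    have : G (x + r • circleDir φ) = 0 := hsupp _ (by
      rwa [add_sub_cancel_left, norm_smul, norm_circleDir, mul_one, Real.norm_of_nonneg hr0.le])
    simp [J, this]
  have hpi : ∀ r : ℝ, ∫ φ in -π..π, (r : ℂ) * G (x + r • circleDir φ)
      = ∫ φ in Ioo (-π) π, J (r, φ) := fun r => by
    rw [intervalIntegral.integral_of_le (by linarith [Real.pi_pos]), integral_Ioc_eq_integral_Ioo]
  simp only [hpi]
  rw [IntegrableOn, Measure.volume_eq_prod, ← Measure.prod_restrict] at hintegrable
  refine ⟨hintegrable.integral_prod_left, ?_⟩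
  have e1 : ∫ y, G y = ∫ y, G (x + y) := (integral_add_left_eq_self G x).symm
  have e2 : ∫ y, G (x + y) = ∫ z : ℂ, G (x + Complex.orthonormalBasisOneI.repr z) :=
    ((Complex.orthonormalBasisOneI.measurePreserving_repr).integral_comp
      Complex.orthonormalBasisOneI.repr.toHomeomorph.measurableEmbedding
      (fun y => G (x + y))).symm
  rw [e1, e2, ← Complex.integral_comp_polarCoord_symm]
  have e3 : polarCoord.target = Ioi (0 : ℝ) ×ˢ Ioo (-π) π := rfl
  rw [e3, Measure.volume_eq_prod, ← Measure.prod_restrict]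
  rw [← integral_prod _ hintegrable]
  refine integral_congr_ae (Eventually.of_forall fun p => ?_)
  simp only [J, Complex.real_smul]
  congr 3
  ext i
  fin_cases i <;> simp [circleDir, Complex.polarCoord_symm_apply, Complex.cos_ofReal_re,
    Complex.sin_ofReal_re]

/-! ### The representation formula for compactly supported functions -/

theorem laplacian2_congr {v w : R2 → ℂ} {y : R2} (h : v =ᶠ[𝓝 y] w) :
    laplacian2 v y = laplacian2 w y := by
  refine Finset.sum_congr rfl fun i _ => ?_
  have h2 : (fun z => fderiv ℝ v z (EuclideanSpace.single i (1 : ℝ)))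
      =ᶠ[𝓝 y] fun z => fderiv ℝ w z (EuclideanSpace.single i (1 : ℝ)) :=
    (h.fderiv (𝕜 := ℝ)).mono fun z hz => by simp only [hz]
  rw [h2.fderiv_eq]

theorem laplacian2_zero (y : R2) : laplacian2 (fun _ => 0) y = 0 := by
  simp [laplacian2]

theorem laplacian2_eq_zero_of_notMem_tsupport {v : R2 → ℂ} {y : R2} (h : y ∉ tsupport v) :
    laplacian2 v y = 0 := by
  rw [laplacian2_congr (w := fun _ => 0) (notMem_tsupport_iff_eventuallyEq.1 h), laplacian2_zero]

theorem continuousAt_outgoing_norm {κ : ℝ} (hκ : 0 < κ) {x y : R2} (hxy : y ≠ x) :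
    ContinuousAt (fun y => outgoing ((κ * ‖y - x‖ : ℝ) : ℂ)) y := by
  have hpos : 0 < κ * ‖y - x‖ := mul_pos hκ (norm_pos_iff.2 (sub_ne_zero.2 hxy))
  have h1 : ContinuousAt outgoing ((κ * ‖y - x‖ : ℝ) : ℂ) :=
    (hasDerivAt_outgoing (by simpa using hpos)).continuousAt
  exact ContinuousAt.comp (f := fun y : R2 => ((κ * ‖y - x‖ : ℝ) : ℂ)) h1 (by fun_prop)

theorem continuous_mul_outgoing_norm {κ : ℝ} (hκ : 0 < κ) {f : R2 → ℂ} (hf : Continuous f)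
    {x : R2} (h0 : x ∉ tsupport f) :
    Continuous fun y => f y * outgoing ((κ * ‖y - x‖ : ℝ) : ℂ) := by
  refine continuous_iff_continuousAt.2 fun y => ?_
  rcases eq_or_ne y x with rfl | hy
  · have : (fun z => f z * outgoing ((κ * ‖z - y‖ : ℝ) : ℂ)) =ᶠ[𝓝 y] fun _ => 0 :=
      (notMem_tsupport_iff_eventuallyEq.1 h0).mono fun z hz => by simp [hz]
    exact continuousAt_const.congr this.symm
  · exact hf.continuousAt.mul (continuousAt_outgoing_norm hκ hy)

/-- A compactly supported `C²` function is the outgoing potential of its Helmholtz source. The proof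
integrates the radial Wronskian of the circular mean and the outgoing kernel. -/
theorem outgoing_representation_of_hasCompactSupport {κ : ℝ} (hκ : 0 < κ) {v : R2 → ℂ}
    (hv : ContDiff ℝ 2 v) (hsupp : HasCompactSupport v) {x : R2}
    (hx : x ∉ tsupport fun y => laplacian2 v y + (κ : ℂ) ^ 2 * v y) :
    (2 * π * outgoingResidue : ℂ) * v x
      = -∫ y, (laplacian2 v y + (κ : ℂ) ^ 2 * v y) * outgoing ((κ * ‖y - x‖ : ℝ) : ℂ) := by
  set f : R2 → ℂ := fun y => laplacian2 v y + (κ : ℂ) ^ 2 * v y with hfdef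
  have hvc := hv.continuous
  have hlap := continuous_laplacian2 hv
  have hc := continuous_circleDir
  have h1 := continuous_fderiv_of_contDiff_two hv
  have hf : Continuous f := by fun_prop
  obtain ⟨ρ, hρ⟩ := hsupp.isCompact.isBounded.subset_closedBall x
  have hout : ∀ y, ρ < ‖y - x‖ → y ∉ tsupport v := fun y hy hmem => by
    have := hρ hmem
    rw [Metric.mem_closedBall, dist_eq_norm] at this
    linarith
  obtain ⟨hintegrable, hpolar⟩ := integral_eq_polar
    (G := fun y => f y * outgoing ((κ * ‖y - x‖ : ℝ) : ℂ))
    (continuous_mul_outgoing_norm hκ hf hx) x (ρ := ρ) fun y hy => by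
      simp [hfdef, laplacian2_eq_zero_of_notMem_tsupport (hout y hy),
        image_eq_zero_of_notMem_tsupport (hout y hy)]
  set m : ℝ → ℂ := fun r => ∫ φ in -π..π, v (x + r • circleDir φ) with hm
  set m' : ℝ → ℂ := fun r => ∫ φ in -π..π, fderiv ℝ v (x + r • circleDir φ) (circleDir φ) with hm'
  set W : ℝ → ℂ := fun r => (r : ℂ) * m' r * outgoing ((κ * r : ℝ) : ℂ)
    - m r * (((κ * r : ℝ) : ℂ) * outgoingDeriv ((κ * r : ℝ) : ℂ)) with hW
  have hmd : ∀ r, HasDerivAt m (m' r) r := hasDerivAt_circularMean hv x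
  have hm'd := hasDerivAt_circularMean_deriv hv x
  have hscale : ∀ r : ℝ, HasDerivAt (fun r : ℝ => ((κ * r : ℝ) : ℂ)) (κ : ℂ) r := fun r => by
    simpa using ((hasDerivAt_id r).const_mul κ).ofReal_comp
  have hWd : ∀ r ∈ Ioi (0 : ℝ), HasDerivAt W
      (∫ φ in -π..π, (r : ℂ) * (f (x + r • circleDir φ)
        * outgoing ((κ * ‖x + r • circleDir φ - x‖ : ℝ) : ℂ))) r := by
    intro r hr
    have hr0 : 0 < r := hr
    have hre : 0 < (((κ * r : ℝ) : ℂ)).re := by simpa using mul_pos hκ hr0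
    have hk : HasDerivAt (fun r : ℝ => outgoing ((κ * r : ℝ) : ℂ))
        (outgoingDeriv ((κ * r : ℝ) : ℂ) * κ) r :=
      (hasDerivAt_outgoing hre).comp (h₂ := outgoing) r (hscale r)
    have hq : HasDerivAt (fun r : ℝ => ((κ * r : ℝ) : ℂ) * outgoingDeriv ((κ * r : ℝ) : ℂ))
        (-((κ * r : ℝ) : ℂ) * outgoing ((κ * r : ℝ) : ℂ) * κ) r :=
      (hasDerivAt_mul_outgoingDeriv hre).comp (h₂ := fun z : ℂ => z * outgoingDeriv z) r (hscale r)
    have hrd : HasDerivAt (fun r : ℝ => (r : ℂ)) 1 r := by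
      simpa using (hasDerivAt_id r).ofReal_comp
    refine (((hrd.mul (hm'd r)).mul hk).sub ((hmd r).mul hq)).congr_deriv ?_
    have hnorm : ∀ φ, ‖x + r • circleDir φ - x‖ = r := fun φ => by
      rw [add_sub_cancel_left, norm_smul, norm_circleDir, mul_one, Real.norm_of_nonneg hr0.le]
    have hfin : ∫ φ in -π..π, f (x + r • circleDir φ)
        = (∫ φ in -π..π, laplacian2 v (x + r • circleDir φ)) + (κ : ℂ) ^ 2 * m r := by
      rw [hm, ← intervalIntegral.integral_const_mul, ← intervalIntegral.integral_add]
      · exact (by fun_prop : Continuous fun φ => laplacian2 v (x + r • circleDir φ))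
          |>.intervalIntegrable _ _
      · exact (by fun_prop : Continuous fun φ => (κ : ℂ) ^ 2 * v (x + r • circleDir φ))
          |>.intervalIntegrable _ _
    simp only [hnorm]
    rw [intervalIntegral.integral_const_mul, intervalIntegral.integral_mul_const, hfin]
    have hdar := circularMean_darboux hv x r
    simp only [Pi.mul_apply]
    push_cast at hdar ⊢
    linear_combination outgoing (κ * r) * hdar
  have hm0 : m 0 = 2 * π * v x := by
    simp only [hm, zero_smul, add_zero, intervalIntegral.integral_const, Complex.real_smul]
    push_cast
    ring
  have hWlim : Tendsto W (𝓝[>] 0) (𝓝 (2 * π * outgoingResidue * v x)) := by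
    have hsc : Tendsto (fun r : ℝ => κ * r) (𝓝[>] 0) (𝓝[>] 0) := by
      refine tendsto_nhdsWithin_iff.2 ⟨?_, ?_⟩
      · have : Tendsto (fun r : ℝ => κ * r) (𝓝 0) (𝓝 (κ * 0)) := by
          exact (continuous_const.mul continuous_id).tendsto 0
        rw [mul_zero] at this
        exact this.mono_left nhdsWithin_le_nhds
      · filter_upwards [self_mem_nhdsWithin] with r hr using mul_pos hκ hr
    have t1 := tendsto_mul_outgoing.comp hsc
    have t2 := tendsto_mul_outgoingDeriv.comp hsc
    have tm : Tendsto m (𝓝[>] 0) (𝓝 (m 0)) :=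
      (hmd 0).continuousAt.tendsto.mono_left nhdsWithin_le_nhds
    have tm' : Tendsto m' (𝓝[>] 0) (𝓝 (m' 0)) :=
      (hm'd 0).continuousAt.tendsto.mono_left nhdsWithin_le_nhds
    have ht := ((tm'.mul t1).const_mul ((κ : ℂ)⁻¹)).sub (tm.mul t2)
    have hval : ((κ : ℂ)⁻¹ * (m' 0 * 0) - m 0 * -(outgoingResidue : ℂ))
        = 2 * π * outgoingResidue * v x := by rw [hm0]; ring
    rw [hval] at ht
    refine ht.congr fun r => ?_
    have hκ' : (κ : ℂ) ≠ 0 := by exact_mod_cast hκ.ne'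
    simp only [hW, Function.comp]
    push_cast
    field_simp
  have hWtop : Tendsto W atTop (𝓝 0) := by
    refine tendsto_const_nhds.congr' ?_
    filter_upwards [eventually_gt_atTop ρ, eventually_gt_atTop 0] with r hr hr0
    have hnot : ∀ φ, x + r • circleDir φ ∉ tsupport v := fun φ => hout _ (by
      rwa [add_sub_cancel_left, norm_smul, norm_circleDir, mul_one, Real.norm_of_nonneg hr0.le])
    have e1 : m r = 0 := by
      simp [hm, image_eq_zero_of_notMem_tsupport (hnot _)]
    have e2 : m' r = 0 := by
      have : ∀ φ, fderiv ℝ v (x + r • circleDir φ) = 0 := fun φ =>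
        image_eq_zero_of_notMem_tsupport fun h => hnot φ (tsupport_fderiv_subset ℝ h)
      simp [hm', this]
    simp [hW, e1, e2]
  set L : ℂ := 2 * π * outgoingResidue * v x with hL
  have hU : ∀ r ∈ Ioi (0 : ℝ), Function.update W 0 L =ᶠ[𝓝 r] W := fun r hr => by
    filter_upwards [eventually_ne_nhds (ne_of_gt hr)] with s hs using Function.update_of_ne hs _ _
  have hFTC := integral_Ioi_of_hasDerivAt_of_tendsto (f := Function.update W 0 L) (a := 0) (m := 0)
    (by
      rw [continuousWithinAt_update_same, Ici_sdiff_left]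
      exact hWlim)
    (fun r hr => (hWd r hr).congr_of_eventuallyEq (hU r hr)) hintegrable
    (hWtop.congr' (by
      filter_upwards [eventually_gt_atTop 0] with r hr
      rw [Function.update_of_ne (ne_of_gt hr)]))
  rw [Function.update_self, zero_sub, ← hpolar] at hFTC
  rw [hFTC, neg_neg]

/-! ### Cutoffs and integration by parts -/

theorem integral_fderiv_apply_eq_zero {g : R2 → ℂ} (hg : ContDiff ℝ 1 g)
    (hsupp : HasCompactSupport g) (w : R2) : ∫ y, fderiv ℝ g y w = 0 := by
  have hi : Integrable fun y => fderiv ℝ g y w :=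
    ((hg.continuous_fderiv (by norm_num)).clm_apply
      continuous_const).integrable_of_hasCompactSupport
      (hsupp.fderiv_apply ℝ w)
  have h := integral_mul_fderiv_eq_neg_fderiv_mul_of_integrable (μ := (volume : Measure R2))
    (f := fun _ => (1 : ℂ)) (g := g) (v := w) (by simp) (by simpa using hi)
    (by simpa using hg.continuous.integrable_of_hasCompactSupport hsupp)
    (fun _ _ => differentiableAt_const _) (fun y _ => hg.differentiable (by norm_num) y)
  simpa using h

theorem contDiff_of_forall_mem_tsupport {n : WithTop ℕ∞} {g : R2 → ℂ}
    (h : ∀ y ∈ tsupport g, ContDiffAt ℝ n g y) : ContDiff ℝ n g := by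
  refine contDiff_iff_contDiffAt.2 fun y => ?_
  by_cases hy : y ∈ tsupport g
  · exact h y hy
  · exact (contDiffAt_const (c := 0)).congr_of_eventuallyEq (notMem_tsupport_iff_eventuallyEq.1 hy)

theorem contDiff_fderiv_apply_of_contDiff_two {v : R2 → ℂ} (hv : ContDiff ℝ 2 v) (w : R2) :
    ContDiff ℝ 1 fun y => fderiv ℝ v y w :=
  (hv.fderiv_right (m := 1) (by norm_num)).clm_apply contDiff_const

theorem laplacian2_mul {η u : R2 → ℂ} (hη : ContDiff ℝ 2 η) (hu : ContDiff ℝ 2 u) (y : R2) :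
    laplacian2 (fun z => η z * u z) y = η y * laplacian2 u y
      + ∑ i : Fin 2, 2 * (fderiv ℝ η y (EuclideanSpace.single i 1)
        * fderiv ℝ u y (EuclideanSpace.single i 1)) + u y * laplacian2 η y := by
  have dη := hη.differentiable (by norm_num)
  have du := hu.differentiable (by norm_num)
  unfold laplacian2
  rw [Finset.mul_sum, Finset.mul_sum, ← Finset.sum_add_distrib, ← Finset.sum_add_distrib]
  refine Finset.sum_congr rfl fun i _ => ?_
  set e : R2 := EuclideanSpace.single i 1
  have d2η := (contDiff_fderiv_apply_of_contDiff_two hη e).differentiable (by norm_num)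
  have d2u := (contDiff_fderiv_apply_of_contDiff_two hu e).differentiable (by norm_num)
  have h1 : (fun z => fderiv ℝ (fun z => η z * u z) z e)
      = fun z => η z * fderiv ℝ u z e + u z * fderiv ℝ η z e := by
    funext z
    rw [fderiv_fun_mul (dη z) (du z)]
    simp
  rw [h1, fderiv_fun_add ((dη y).fun_mul (d2u y)) ((du y).fun_mul (d2η y)),
    fderiv_fun_mul (dη y) (d2u y), fderiv_fun_mul (du y) (d2η y)]
  simp only [add_apply, smul_apply, smul_eq_mul]
  ring

theorem integral_cutoff_commutator_mul {η u k : R2 → ℂ} (hη : ContDiff ℝ 2 η)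
    (hηc : HasCompactSupport η) (hu : ContDiff ℝ 2 u)
    (hk : ∀ y ∈ tsupport (fderiv ℝ η), ContDiffAt ℝ 1 k y) :
    ∫ y, (∑ i : Fin 2, 2 * (fderiv ℝ η y (EuclideanSpace.single i 1)
        * fderiv ℝ u y (EuclideanSpace.single i 1)) + u y * laplacian2 η y) * k y
      = ∫ y, ∑ i : Fin 2, fderiv ℝ η y (EuclideanSpace.single i 1)
        * (fderiv ℝ u y (EuclideanSpace.single i 1) * k y
          - u y * fderiv ℝ k y (EuclideanSpace.single i 1)) := by
  have hu1 : ContDiff ℝ 1 u := hu.of_le (by norm_num)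
  have hts : ∀ w : R2, tsupport (fun y => fderiv ℝ η y w) ⊆ tsupport (fderiv ℝ η) := fun w =>
    closure_mono fun y hy h0 => hy (by simp [h0])
  set P : Fin 2 → R2 → ℂ := fun i y => fderiv ℝ η y (EuclideanSpace.single i 1) with hP
  have hPc : ∀ i, HasCompactSupport (P i) := fun i => hηc.fderiv_apply ℝ _
  have hP1 : ∀ i, ContDiff ℝ 1 (P i) := fun i => contDiff_fderiv_apply_of_contDiff_two hη _
  have hg : ∀ i, ContDiff ℝ 1 fun y => P i y * (u y * k y) := fun i =>
    contDiff_of_forall_mem_tsupport fun y hy => (hP1 i).contDiffAt.mul (hu1.contDiffAt.mul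
      (hk y (hts _ (tsupport_mul_subset_left hy))))
  have hgc : ∀ i, HasCompactSupport fun y => P i y * (u y * k y) := fun i => (hPc i).mul_right
  have hB : ∀ i, Integrable fun y => P i y * (fderiv ℝ u y (EuclideanSpace.single i 1) * k y
      - u y * fderiv ℝ k y (EuclideanSpace.single i 1)) := fun i => by
    refine Continuous.integrable_of_hasCompactSupport
      (continuous_of_tsupport fun y hy => ?_) (hPc i).mul_right
    have hky := hk y (hts _ (tsupport_mul_subset_left hy))
    have h1 : ContinuousAt (fun y => fderiv ℝ k y (EuclideanSpace.single i (1 : ℝ))) y :=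
      ((hky.fderiv_right (m := 0) (by norm_num)).continuousAt).clm_apply continuousAt_const
    have h2 : ContinuousAt (fun y => fderiv ℝ u y (EuclideanSpace.single i (1 : ℝ))) y :=
      (contDiff_fderiv_apply_of_contDiff_two hu _).continuous.continuousAt
    exact (hP1 i).continuous.continuousAt.mul
      ((h2.mul hky.continuousAt).sub (hu1.continuous.continuousAt.mul h1))
  have hD : ∀ i, Integrable fun y =>
      fderiv ℝ (fun y => P i y * (u y * k y)) y (EuclideanSpace.single i 1) := fun i =>
    (((hg i).continuous_fderiv (by norm_num)).clm_apply
      continuous_const).integrable_of_hasCompactSupport ((hgc i).fderiv_apply ℝ _)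
  have hpt : ∀ y, (∑ i : Fin 2, 2 * (P i y * fderiv ℝ u y (EuclideanSpace.single i 1))
        + u y * laplacian2 η y) * k y
      = ∑ i : Fin 2, (P i y * (fderiv ℝ u y (EuclideanSpace.single i 1) * k y
          - u y * fderiv ℝ k y (EuclideanSpace.single i 1))
        + fderiv ℝ (fun y => P i y * (u y * k y)) y (EuclideanSpace.single i 1)) := by
    intro y
    have hlap : laplacian2 η y = ∑ i : Fin 2, fderiv ℝ (P i) y (EuclideanSpace.single i 1) := rfl
    rw [hlap, Finset.mul_sum, ← Finset.sum_add_distrib, Finset.sum_mul]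
    refine Finset.sum_congr rfl fun i _ => ?_
    by_cases hy : y ∈ tsupport (P i)
    · have dk := (hk y (hts _ hy)).differentiableAt (by norm_num)
      have du := hu1.differentiable (by norm_num) y
      rw [fderiv_fun_mul ((hP1 i).differentiable (by norm_num) y) (du.fun_mul dk),
        fderiv_fun_mul du dk]
      simp only [add_apply, smul_apply, smul_eq_mul]
      ring
    · have hz := notMem_tsupport_iff_eventuallyEq.1 hy
      have hz2 : (fun y => P i y * (u y * k y)) =ᶠ[𝓝 y] fun _ => 0 :=
        hz.mono fun z hz => by simp [hz]
      have hz3 : P i =ᶠ[𝓝 y] fun _ => 0 := hz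
      rw [hz2.fderiv_eq, hz3.fderiv_eq, hz3.eq_of_nhds]
      simp
  rw [integral_congr_ae (Eventually.of_forall hpt)]
  rw [integral_finsetSum _ fun i _ => (hB i).fun_add (hD i), integral_finsetSum _ fun i _ => hB i]
  refine Finset.sum_congr rfl fun i _ => ?_
  rw [integral_add (hB i) (hD i), integral_fderiv_apply_eq_zero (hg i) (hgc i), add_zero]

/-! ### The radial cutoff -/

/-- A smooth radial cutoff, equal to `1` on the ball of radius `T` and to `0` outside the ball of
radius `2 T`. -/
def radialCutoff (T : ℝ) (y : R2) : ℂ := (Real.smoothTransition (2 - ‖y‖ ^ 2 / T ^ 2) : ℝ)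

theorem contDiff_radialCutoff (T : ℝ) : ContDiff ℝ 2 (radialCutoff T) := by
  have h : ContDiff ℝ 2 fun y : R2 => 2 - ‖y‖ ^ 2 / T ^ 2 :=
    contDiff_const.sub ((contDiff_norm_sq ℝ).div_const _)
  exact Complex.ofRealCLM.contDiff.comp
    ((Real.smoothTransition.contDiff (n := 2)).comp h)

theorem radialCutoff_eq_one {T : ℝ} (hT : 0 < T) {y : R2} (hy : ‖y‖ ≤ T) :
    radialCutoff T y = 1 := by
  have : ‖y‖ ^ 2 / T ^ 2 ≤ 1 := (div_le_one (by positivity)).2 (by gcongr)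
  simp [radialCutoff, Real.smoothTransition.one_of_one_le (by linarith : 1 ≤ 2 - ‖y‖ ^ 2 / T ^ 2)]

theorem radialCutoff_eq_zero {T : ℝ} (hT : 0 < T) {y : R2} (hy : 2 * T ≤ ‖y‖) :
    radialCutoff T y = 0 := by
  have : 2 ≤ ‖y‖ ^ 2 / T ^ 2 := (le_div_iff₀ (by positivity)).2 (by nlinarith)
  simp [radialCutoff, Real.smoothTransition.zero_of_nonpos (by linarith : 2 - ‖y‖ ^ 2 / T ^ 2 ≤ 0)]

theorem tsupport_radialCutoff_subset {T : ℝ} (hT : 0 < T) :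
    tsupport (radialCutoff T) ⊆ Metric.closedBall 0 (2 * T) := by
  refine closure_minimal (fun y hy => ?_) Metric.isClosed_closedBall
  rw [mem_closedBall_zero_iff]
  by_contra h
  exact hy (radialCutoff_eq_zero hT (not_le.1 h).le)

theorem hasCompactSupport_radialCutoff {T : ℝ} (hT : 0 < T) :
    HasCompactSupport (radialCutoff T) :=
  (isCompact_closedBall _ _).of_isClosed_subset (isClosed_tsupport _)
    (tsupport_radialCutoff_subset hT)

theorem tsupport_fderiv_radialCutoff_subset {T : ℝ} (hT : 0 < T) :
    tsupport (fderiv ℝ (radialCutoff T)) ⊆ (Metric.ball 0 T)ᶜ := by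
  refine closure_minimal (fun y hy hmem => hy ?_) Metric.isOpen_ball.isClosed_compl
  have : radialCutoff T =ᶠ[𝓝 y] fun _ => 1 := by
    filter_upwards [Metric.isOpen_ball.mem_nhds hmem] with z hz
    exact radialCutoff_eq_one hT (mem_ball_zero_iff.1 hz).le
  rw [this.fderiv_eq]
  simp

theorem fderiv_radialCutoff (T : ℝ) (y w : R2) : fderiv ℝ (radialCutoff T) y w
    = ((deriv Real.smoothTransition (2 - ‖y‖ ^ 2 / T ^ 2)
      * (-(2 * inner ℝ y w / T ^ 2)) : ℝ) : ℂ) := by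
  have h1 : HasFDerivAt (fun y : R2 => 2 - ‖y‖ ^ 2 / T ^ 2)
      (-((T ^ 2)⁻¹ • (2 • innerSL ℝ y))) y := by
    simpa [div_eq_mul_inv] using
      ((hasStrictFDerivAt_norm_sq y).hasFDerivAt.mul_const ((T ^ 2)⁻¹)).const_sub 2
  have h2 := ((Real.smoothTransition.contDiff (n := 1)).differentiable (by norm_num)
    (2 - ‖y‖ ^ 2 / T ^ 2)).hasDerivAt
  have h3 := h2.comp_hasFDerivAt (h₂ := Real.smoothTransition) y h1
  have h4 : HasFDerivAt (radialCutoff T) _ y :=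
    HasFDerivAt.comp (g := Complex.ofRealCLM) y Complex.ofRealCLM.hasFDerivAt h3
  rw [h4.fderiv]
  simp
  left
  ring

theorem exists_abs_deriv_smoothTransition_le :
    ∃ C, 0 ≤ C ∧ ∀ t, |deriv Real.smoothTransition t| ≤ C := by
  have hc : Continuous (deriv Real.smoothTransition) :=
    (Real.smoothTransition.contDiff (n := 1)).continuous_deriv (by norm_num)
  obtain ⟨C, hC⟩ := isCompact_Icc.exists_bound_of_continuousOn (s := Icc (0 : ℝ) 1) hc.continuousOn
  refine ⟨C, (norm_nonneg _).trans (hC 0 (by simp)), fun t => ?_⟩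
  by_cases ht : t ∈ Icc (0 : ℝ) 1
  · exact hC t ht
  · have h0 : deriv Real.smoothTransition t = 0 := by
      rcases lt_or_ge t 0 with h | h
      · have : Real.smoothTransition =ᶠ[𝓝 t] fun _ => 0 := by
          filter_upwards [eventually_lt_nhds h] with s hs
          exact Real.smoothTransition.zero_of_nonpos hs.le
        rw [this.deriv_eq, deriv_const]
      · have h1 : 1 < t := not_le.1 fun h1 => ht ⟨h, h1⟩
        have : Real.smoothTransition =ᶠ[𝓝 t] fun _ => 1 := by
          filter_upwards [eventually_gt_nhds h1] with s hs
          exact Real.smoothTransition.one_of_one_le hs.le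
        rw [this.deriv_eq, deriv_const]
    rw [h0, abs_zero]
    exact (norm_nonneg _).trans (hC 0 (by simp))

/-- Only the radial derivative enters the commutator with a radial cutoff. -/
theorem sum_fderiv_radialCutoff_mul (T : ℝ) (y : R2) (l : R2 →L[ℝ] ℂ) :
    ∑ i : Fin 2, fderiv ℝ (radialCutoff T) y (EuclideanSpace.single i 1)
        * l (EuclideanSpace.single i 1)
      = ((deriv Real.smoothTransition (2 - ‖y‖ ^ 2 / T ^ 2) * (-(2 / T ^ 2)) : ℝ) : ℂ) * l y := by
  have hy : y = y 0 • EuclideanSpace.single (0 : Fin 2) (1 : ℝ)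
      + y 1 • EuclideanSpace.single (1 : Fin 2) (1 : ℝ) := by
    ext i; fin_cases i <;> simp
  have hl : l y = y 0 * l (EuclideanSpace.single 0 1) + y 1 * l (EuclideanSpace.single 1 1) := by
    conv_lhs => rw [hy]
    simp
  simp only [fderiv_radialCutoff, Fin.sum_univ_two, hl]
  simp only [EuclideanSpace.inner_single_right]
  simp
  ring

/-! ### Radial asymptotics of the outgoing kernel -/

/-- The outgoing kernel with pole at `x`. -/
def outgoingKernel (κ : ℝ) (x y : R2) : ℂ := outgoing ((κ * ‖y - x‖ : ℝ) : ℂ)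

theorem contDiffAt_outgoingKernel {κ : ℝ} (hκ : 0 < κ) {x y : R2} (hxy : y ≠ x) :
    ContDiffAt ℝ 1 (outgoingKernel κ x) y := by
  have hpos : 0 < κ * ‖y - x‖ := mul_pos hκ (norm_pos_iff.2 (sub_ne_zero.2 hxy))
  have hopen : IsOpen {w : ℂ | 0 < w.re} := isOpen_lt continuous_const Complex.continuous_re
  have hd : DifferentiableOn ℂ outgoing {w | 0 < w.re} := fun w hw =>
    (hasDerivAt_outgoing hw).differentiableAt.differentiableWithinAt
  have h1 : ContDiffAt ℝ 1 outgoing ((κ * ‖y - x‖ : ℝ) : ℂ) :=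
    ((hd.contDiffOn hopen).contDiffAt (hopen.mem_nhds (by simpa using hpos))).restrict_scalars ℝ
  have h2 : ContDiffAt ℝ 1 (fun y : R2 => ‖y - x‖) y :=
    (contDiffAt_id.sub contDiffAt_const).norm ℝ (sub_ne_zero.2 hxy)
  exact h1.comp y (f := fun y : R2 => ((κ * ‖y - x‖ : ℝ) : ℂ))
    (Complex.ofRealCLM.contDiff.contDiffAt.comp y (contDiffAt_const.mul h2))

theorem fderiv_outgoingKernel {κ : ℝ} (hκ : 0 < κ) {x y : R2} (hxy : y ≠ x) (w : R2) :
    fderiv ℝ (outgoingKernel κ x) y w = outgoingDeriv ((κ * ‖y - x‖ : ℝ) : ℂ)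
      * ((κ * (inner ℝ (y - x) w / ‖y - x‖) : ℝ) : ℂ) := by
  have hn : 0 < ‖y - x‖ := norm_pos_iff.2 (sub_ne_zero.2 hxy)
  have hpos : 0 < κ * ‖y - x‖ := mul_pos hκ hn
  have hcurve : HasDerivAt (fun t : ℝ => y + t • w - x) w 0 := by
    simpa using ((((hasDerivAt_id (0 : ℝ)).smul_const w).const_add y).sub_const x)
  have hsq : HasDerivAt (fun t : ℝ => ‖y + t • w - x‖) (inner ℝ (y - x) w / ‖y - x‖) 0 := by
    have h := hcurve.norm_sq.sqrt (by simpa using hn.ne')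
    simp only [Real.sqrt_sq (norm_nonneg _), zero_smul, add_zero] at h
    refine h.congr_deriv ?_
    field_simp
  have hlin : HasDerivAt (fun t : ℝ => ((κ * ‖y + t • w - x‖ : ℝ) : ℂ))
      ((κ * (inner ℝ (y - x) w / ‖y - x‖) : ℝ) : ℂ) 0 := (hsq.const_mul κ).ofReal_comp
  have hD : HasDerivAt (fun t : ℝ => outgoingKernel κ x (y + t • w)) _ 0 :=
    HasDerivAt.comp (h₂ := outgoing) 0 (hasDerivAt_outgoing (by simpa using hpos)) hlin
  have hl := ((contDiffAt_outgoingKernel hκ hxy).differentiableAt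
    (by norm_num)).hasFDerivAt.hasLineDerivAt w
  rw [HasLineDerivAt] at hl
  rw [hl.unique hD]
  simp

theorem exists_outgoingKernel_bounds {κ : ℝ} (hκ : 0 < κ) (x : R2) :
    ∃ A, 0 ≤ A ∧ ∀ y, 2 * ‖x‖ + 1 ≤ ‖y‖ → ‖outgoingKernel κ x y‖ * √‖y‖ ≤ A ∧
      ‖fderiv ℝ (outgoingKernel κ x) y (‖y‖⁻¹ • y) - Complex.I * κ * outgoingKernel κ x y‖
        * (‖y‖ * √‖y‖) ≤ A := by
  set q : ℝ := √(2 / κ) with hq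
  set M₀ := momentBound 0
  set M₁ := momentBound 1
  have hM₀ : 0 ≤ M₀ := momentBound_nonneg 0
  have hM₁ : 0 ≤ M₁ := momentBound_nonneg 1
  have hq0 : 0 ≤ q := Real.sqrt_nonneg _
  refine ⟨max (q * M₀) (2 * q * (M₁ + 2 * ‖x‖ * κ * M₀)), le_max_of_le_left (by positivity),
    fun y hy => ?_⟩
  have hx0 := norm_nonneg x
  have hy0 : 0 < ‖y‖ := by linarith
  set ρ : ℝ := ‖y - x‖ with hρ
  have hρ1 : ‖y‖ - ‖x‖ ≤ ρ := norm_sub_norm_le y x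
  have hρ2 : ρ ≤ ‖y‖ + ‖x‖ := norm_sub_le y x
  have hρ0 : 0 < ρ := by linarith
  have hxy : y ≠ x := fun h => by simp [hρ, h] at hρ0
  set s : ℝ := κ * ρ with hs
  have hs0 : 0 < s := mul_pos hκ hρ0
  have hys : ‖y‖ ≤ 2 / κ * s := by
    rw [hs]; field_simp; linarith
  have hysq : √‖y‖ ≤ q * √s := by
    rw [hq, ← Real.sqrt_mul (by positivity)]
    exact Real.sqrt_le_sqrt hys
  have b0 : √s * ‖outgoing (s : ℂ)‖ ≤ M₀ := by
    simpa using norm_outgoing_le (w := (s : ℂ)) (by simpa using hs0)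
  have b1 : s * √s * ‖outgoingDeriv (s : ℂ) - Complex.I * outgoing (s : ℂ)‖ ≤ M₁ := by
    simpa using norm_outgoingDeriv_sub_le (w := (s : ℂ)) (by simpa using hs0)
  have hK : outgoingKernel κ x y = outgoing (s : ℂ) := rfl
  constructor
  · refine le_trans ?_ (le_max_left _ _)
    rw [hK]
    calc ‖outgoing (s : ℂ)‖ * √‖y‖ ≤ ‖outgoing (s : ℂ)‖ * (q * √s) := by gcongr
      _ = q * (√s * ‖outgoing (s : ℂ)‖) := by ring
      _ ≤ q * M₀ := by gcongr
  · refine le_trans ?_ (le_max_right _ _)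
    set c : ℝ := inner ℝ (y - x) (‖y‖⁻¹ • y) / ρ with hc
    have hunit : ‖‖y‖⁻¹ • y‖ = 1 := by
      rw [norm_smul, norm_inv, norm_norm, inv_mul_cancel₀ hy0.ne']
    have hcabs : |c| ≤ 1 := by
      rw [hc, abs_div, abs_of_pos hρ0, div_le_one hρ0]
      simpa [hunit] using abs_real_inner_le_norm (y - x) (‖y‖⁻¹ • y)
    have hc1 : 1 - c ≤ 2 * ‖x‖ / ρ := by
      rw [hc, le_div_iff₀ hρ0, sub_mul, div_mul_cancel₀ _ hρ0.ne']
      have h1 : inner ℝ (y - x) (‖y‖⁻¹ • y) = ‖y‖ - inner ℝ x (‖y‖⁻¹ • y) := by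
        rw [inner_sub_left, inner_smul_right, real_inner_self_eq_norm_sq]
        congr 1
        field_simp
      have h2 : inner ℝ x (‖y‖⁻¹ • y) ≤ ‖x‖ := by
        simpa [hunit] using real_inner_le_norm x (‖y‖⁻¹ • y)
      rw [h1]
      linarith
    have hc2 : 0 ≤ 1 - c := by linarith [(abs_le.1 hcabs).2]
    have hsplit : fderiv ℝ (outgoingKernel κ x) y (‖y‖⁻¹ • y)
        - Complex.I * κ * outgoingKernel κ x y
        = ((κ * c : ℝ) : ℂ) * (outgoingDeriv (s : ℂ) - Complex.I * outgoing (s : ℂ))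
          - Complex.I * ((κ * (1 - c) : ℝ) : ℂ) * outgoing (s : ℂ) := by
      rw [fderiv_outgoingKernel hκ hxy, hK]
      change outgoingDeriv (s : ℂ) * ((κ * c : ℝ) : ℂ) - _ = _
      push_cast
      ring
    have hn : ‖fderiv ℝ (outgoingKernel κ x) y (‖y‖⁻¹ • y)
        - Complex.I * κ * outgoingKernel κ x y‖
        ≤ κ * ‖outgoingDeriv (s : ℂ) - Complex.I * outgoing (s : ℂ)‖
          + κ * (2 * ‖x‖ / ρ) * ‖outgoing (s : ℂ)‖ := by
      rw [hsplit]
      refine (norm_sub_le _ _).trans ?_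
      rw [norm_mul, norm_mul, norm_mul, Complex.norm_real, Complex.norm_real, Complex.norm_I,
        one_mul, norm_mul, norm_mul, Real.norm_of_nonneg hκ.le, Real.norm_of_nonneg hc2,
        Real.norm_eq_abs]
      gcongr
      nlinarith
    have hyy : ‖y‖ * √‖y‖ ≤ (2 / κ * s) * (q * √s) := by gcongr
    calc _ ≤ (κ * ‖outgoingDeriv (s : ℂ) - Complex.I * outgoing (s : ℂ)‖
          + κ * (2 * ‖x‖ / ρ) * ‖outgoing (s : ℂ)‖) * ((2 / κ * s) * (q * √s)) := by gcongr
      _ = 2 * q * (s * √s * ‖outgoingDeriv (s : ℂ) - Complex.I * outgoing (s : ℂ)‖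
          + 2 * ‖x‖ * κ * (√s * ‖outgoing (s : ℂ)‖)) := by
        field_simp
        rw [hs]
        ring
      _ ≤ _ := by gcongr

/-! ### The representation formula for radiating functions -/

/-- The Sommerfeld radiation condition on the whole plane. -/
def IsRadiating (κ : ℝ) (u : R2 → ℂ) : Prop :=
  ∀ ε > 0, ∃ R > 0, ∀ x : R2, R ≤ ‖x‖ →
    ‖(Real.sqrt ‖x‖ : ℂ) * (fderiv ℝ u x (‖x‖⁻¹ • x) - Complex.I * (κ : ℂ) * u x)‖ < ε

theorem IsRadiating.isLittleO_sqrt {κ : ℝ} {u : R2 → ℂ} (hu : ContDiff ℝ 2 u)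
    (h : IsRadiating κ u) {ε : ℝ} (hε : 0 < ε) :
    ∃ R > 0, ∀ y : R2, R ≤ ‖y‖ → ‖u y‖ ≤ ε * √‖y‖ := by
  obtain ⟨R, hR0, hR⟩ := h (ε / 4) (by positivity)
  obtain ⟨M, hM⟩ := (isCompact_closedBall (0 : R2) R).exists_bound_of_continuousOn
    hu.continuous.continuousOn
  have hM0 : 0 ≤ M := (norm_nonneg _).trans (hM 0 (by simp [hR0.le]))
  refine ⟨max R ((2 * M / ε) ^ 2), lt_max_of_lt_left hR0, fun y hy => ?_⟩
  have hyR : R ≤ ‖y‖ := (le_max_left _ _).trans hy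
  have hy0 : 0 < ‖y‖ := hR0.trans_le hyR
  set ω : R2 := ‖y‖⁻¹ • y with hω
  have hω1 : ‖ω‖ = 1 := by rw [hω, norm_smul, norm_inv, norm_norm, inv_mul_cancel₀ hy0.ne']
  have hyω : ‖y‖ • ω = y := by rw [hω, smul_smul, mul_inv_cancel₀ hy0.ne', one_smul]
  have hnorm : ∀ r : ℝ, 0 ≤ r → ‖r • ω‖ = r := fun r hr => by
    rw [norm_smul, hω1, mul_one, Real.norm_of_nonneg hr]
  have hd : ∀ r : ℝ, HasDerivAt
      (fun r : ℝ => Complex.exp (-(Complex.I * κ * r)) * u (r • ω))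
      (Complex.exp (-(Complex.I * κ * r)) * (fderiv ℝ u (r • ω) ω
        - Complex.I * κ * u (r • ω))) r := by
    intro r
    have h1 : HasDerivAt (fun r : ℝ => u (r • ω)) (fderiv ℝ u (r • ω) ω) r :=
      (hu.differentiable (by norm_num) (r • ω)).hasFDerivAt.comp_hasDerivAt r
        (by simpa using (hasDerivAt_id r).smul_const ω)
    have h2 : HasDerivAt (fun r : ℝ => -(Complex.I * κ * (r : ℂ))) (-(Complex.I * κ)) r := by
      simpa using ((hasDerivAt_id r).ofReal_comp.const_mul (Complex.I * κ)).fun_neg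
    refine (h2.cexp.mul h1).congr_deriv ?_
    ring
  have hexp : ∀ r : ℝ, ‖Complex.exp (-(Complex.I * κ * r))‖ = 1 := fun r => by
    rw [Complex.norm_exp]; simp
  have hB : ∀ r ∈ Icc R ‖y‖, HasDerivAt (fun r => M + ε / 2 * √r) (ε / 2 * (1 / (2 * √r))) r :=
    fun r hr => ((Real.hasDerivAt_sqrt (hR0.trans_le hr.1).ne').const_mul _).const_add _
  have key := image_norm_le_of_norm_deriv_right_le_deriv_boundary' (a := R) (b := ‖y‖)
    (B := fun r => M + ε / 2 * √r) (B' := fun r => ε / 2 * (1 / (2 * √r)))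
    (fun r _ => (hd r).continuousAt.continuousWithinAt)
    (fun r _ => (hd r).hasDerivWithinAt)
    (by
      rw [norm_mul, hexp, one_mul]
      have := hM (R • ω) (by simp [hnorm R hR0.le])
      have : 0 ≤ ε / 2 * √R := by positivity
      linarith)
    (fun r hr => (hB r hr).continuousAt.continuousWithinAt)
    (fun r hr => (hB r (Ico_subset_Icc_self hr)).hasDerivWithinAt)
    (fun r hr => by
      have hr0 : 0 < r := hR0.trans_le hr.1
      have hb := hR (r • ω) (by rw [hnorm r hr0.le]; exact hr.1)
      rw [hnorm r hr0.le, inv_smul_smul₀ hr0.ne', norm_mul,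
        Complex.norm_real, Real.norm_of_nonneg (Real.sqrt_nonneg _)] at hb
      rw [norm_mul, hexp, one_mul]
      have hs : 0 < √r := Real.sqrt_pos.2 hr0
      have : ε / 2 * (1 / (2 * √r)) = (ε / 4) / √r := by field_simp; norm_num
      rw [this, le_div_iff₀ hs]
      linarith)
    (right_mem_Icc.2 hyR)
  rw [norm_mul, hexp, one_mul, hyω] at key
  have hs : 2 * M / ε ≤ √‖y‖ := Real.le_sqrt_of_sq_le ((le_max_right _ _).trans hy)
  rw [div_le_iff₀ hε] at hs
  linarith

theorem norm_integral_le_of_forall_norm_le {g : R2 → ℂ} {T B : ℝ} (hT : 0 < T)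
    (h0 : ∀ y, 2 * T < ‖y‖ → g y = 0) (hb : ∀ y, ‖y‖ ≤ 2 * T → ‖g y‖ ≤ B) :
    ‖∫ y, g y‖ ≤ 4 * π * T ^ 2 * B := by
  have h1 : ∫ y, g y = ∫ y in Metric.closedBall 0 (2 * T), g y := by
    refine (setIntegral_eq_integral_of_forall_compl_eq_zero fun y hy => h0 y ?_).symm
    simpa using hy
  rw [h1]
  have hvol : (volume : Measure R2).real (Metric.closedBall 0 (2 * T)) = 4 * π * T ^ 2 := by
    rw [Measure.real, EuclideanSpace.volume_closedBall_fin_two]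
    simp [ENNReal.toReal_ofReal, hT.le, Real.pi_pos.le]
    ring
  calc _ ≤ B * (volume : Measure R2).real (Metric.closedBall 0 (2 * T)) :=
        norm_setIntegral_le_of_norm_le_const measure_closedBall_lt_top
          fun y hy => hb y (by simpa using hy)
    _ = _ := by rw [hvol]; ring

/-- The boundary term of the Green identity for a radiating function and the outgoing kernel. -/
theorem exists_norm_integral_cutoff_le {κ : ℝ} (hκ : 0 < κ) {u : R2 → ℂ} (hu : ContDiff ℝ 2 u)
    (hrad : IsRadiating κ u) (x : R2) {ε : ℝ} (hε : 0 < ε) :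
    ∃ T₀ > 0, ∀ T ≥ T₀, ‖∫ y, ∑ i : Fin 2,
      fderiv ℝ (radialCutoff T) y (EuclideanSpace.single i 1)
        * (fderiv ℝ u y (EuclideanSpace.single i 1) * outgoingKernel κ x y
          - u y * fderiv ℝ (outgoingKernel κ x) y (EuclideanSpace.single i 1))‖ ≤ ε := by
  obtain ⟨A, hA0, hA⟩ := exists_outgoingKernel_bounds hκ x
  obtain ⟨C, hC0, hC⟩ := exists_abs_deriv_smoothTransition_le
  set ε' : ℝ := ε / (32 * π * (C + 1) * (A + 1)) with hε'
  have hε'0 : 0 < ε' := by positivity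
  obtain ⟨R₁, hR₁, hrad1⟩ := hrad ε' hε'0
  obtain ⟨R₂, hR₂, hdec⟩ := hrad.isLittleO_sqrt hu hε'0
  refine ⟨max (max R₁ R₂) (2 * ‖x‖ + 1), lt_max_of_lt_left (lt_max_of_lt_left hR₁), fun T hT => ?_⟩
  have hT1 : R₁ ≤ T := (le_max_left _ _).trans ((le_max_left _ _).trans hT)
  have hT2 : R₂ ≤ T := (le_max_right _ _).trans ((le_max_left _ _).trans hT)
  have hT3 : 2 * ‖x‖ + 1 ≤ T := (le_max_right _ _).trans hT
  have hT0 : 0 < T := hR₁.trans_le hT1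
  have hpt : ∀ y, ∑ i : Fin 2, fderiv ℝ (radialCutoff T) y (EuclideanSpace.single i 1)
        * (fderiv ℝ u y (EuclideanSpace.single i 1) * outgoingKernel κ x y
          - u y * fderiv ℝ (outgoingKernel κ x) y (EuclideanSpace.single i 1))
      = ((deriv Real.smoothTransition (2 - ‖y‖ ^ 2 / T ^ 2) * (-(2 / T ^ 2)) : ℝ) : ℂ)
        * (fderiv ℝ u y y * outgoingKernel κ x y - u y * fderiv ℝ (outgoingKernel κ x) y y) := by
    intro y
    have := sum_fderiv_radialCutoff_mul T y
      (outgoingKernel κ x y • fderiv ℝ u y - u y • fderiv ℝ (outgoingKernel κ x) y)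
    simp only [sub_apply, smul_apply, smul_eq_mul] at this
    simp only [mul_comm _ (outgoingKernel κ x y)]
    exact this
  have hout : ∀ y, y ∉ tsupport (fderiv ℝ (radialCutoff T)) →
      ∑ i : Fin 2, fderiv ℝ (radialCutoff T) y (EuclideanSpace.single i 1)
        * (fderiv ℝ u y (EuclideanSpace.single i 1) * outgoingKernel κ x y
          - u y * fderiv ℝ (outgoingKernel κ x) y (EuclideanSpace.single i 1)) = 0 := by
    intro y hy
    simp [image_eq_zero_of_notMem_tsupport hy]
  have hbound : ∀ y, ‖y‖ ≤ 2 * T → ‖∑ i : Fin 2,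
      fderiv ℝ (radialCutoff T) y (EuclideanSpace.single i 1)
        * (fderiv ℝ u y (EuclideanSpace.single i 1) * outgoingKernel κ x y
          - u y * fderiv ℝ (outgoingKernel κ x) y (EuclideanSpace.single i 1))‖
      ≤ C * (2 / T ^ 2) * (2 * (ε' * A)) := by
    intro y hy
    by_cases hmem : y ∈ tsupport (fderiv ℝ (radialCutoff T))
    swap
    · rw [hout y hmem, norm_zero]; positivity
    have hyT : T ≤ ‖y‖ := by simpa using tsupport_fderiv_radialCutoff_subset hT0 hmem
    have hy0 : 0 < ‖y‖ := hT0.trans_le hyT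
    have hs : 0 < √‖y‖ := Real.sqrt_pos.2 hy0
    obtain ⟨hA1, hA2⟩ := hA y (hT3.trans hyT)
    have hr := (hrad1 y (hT1.trans hyT)).le
    rw [norm_mul, Complex.norm_real, Real.norm_of_nonneg hs.le] at hr
    have hd := hdec y (hT2.trans hyT)
    set k := outgoingKernel κ x y
    set a := fderiv ℝ u y (‖y‖⁻¹ • y) - Complex.I * κ * u y with ha
    set b := fderiv ℝ (outgoingKernel κ x) y (‖y‖⁻¹ • y) - Complex.I * κ * k with hb
    have hysm : ∀ l : R2 →L[ℝ] ℂ, l y = ‖y‖ * l (‖y‖⁻¹ • y) := fun l => by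
      rw [map_smul, Complex.real_smul, ← mul_assoc, ← Complex.ofReal_mul, mul_inv_cancel₀ hy0.ne',
        Complex.ofReal_one, one_mul]
    have hcomb : fderiv ℝ u y y * k - u y * fderiv ℝ (outgoingKernel κ x) y y
        = ‖y‖ * (a * k - u y * b) := by
      rw [hysm (fderiv ℝ u y), hysm (fderiv ℝ (outgoingKernel κ x) y), ha, hb]
      ring
    rw [hpt, hcomb, norm_mul, Complex.norm_real, norm_mul, norm_neg, Real.norm_eq_abs,
      Real.norm_of_nonneg (by positivity : (0 : ℝ) ≤ 2 / T ^ 2)]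
    have h1 : ‖y‖ * (‖a‖ * ‖k‖) ≤ ε' * A := by
      have : ‖y‖ * (‖a‖ * ‖k‖) = (√‖y‖ * ‖a‖) * (‖k‖ * √‖y‖) := by
        nth_rewrite 1 [← Real.mul_self_sqrt hy0.le]; ring
      rw [this]
      gcongr
    have h2 : ‖y‖ * (‖u y‖ * ‖b‖) ≤ ε' * A := by
      calc ‖y‖ * (‖u y‖ * ‖b‖) ≤ ‖y‖ * (ε' * √‖y‖ * ‖b‖) := by gcongr
        _ = ε' * (‖b‖ * (‖y‖ * √‖y‖)) := by ring
        _ ≤ ε' * A := by gcongr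
    have h3 : ‖(‖y‖ : ℂ) * (a * k - u y * b)‖ ≤ 2 * (ε' * A) := by
      rw [norm_mul, Complex.norm_real, norm_norm]
      calc ‖y‖ * ‖a * k - u y * b‖ ≤ ‖y‖ * (‖a‖ * ‖k‖ + ‖u y‖ * ‖b‖) := by
            gcongr
            exact (norm_sub_le _ _).trans (by rw [norm_mul, norm_mul])
        _ ≤ _ := by linarith
    gcongr
    exact hC _
  refine (norm_integral_le_of_forall_norm_le hT0 (fun y hy => hout y fun hm => ?_)
    hbound).trans ?_
  · have := tsupport_radialCutoff_subset hT0 (tsupport_fderiv_subset ℝ hm)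
    rw [mem_closedBall_zero_iff] at this
    linarith
  · have e1 : 4 * π * T ^ 2 * (C * (2 / T ^ 2) * (2 * (ε' * A))) = ε' * (16 * π * C * A) := by
      field_simp; ring
    rw [e1, hε', div_mul_eq_mul_div, div_le_iff₀ (by positivity)]
    have : 16 * π * C * A ≤ 32 * π * (C + 1) * (A + 1) := by
      have := Real.pi_pos
      gcongr <;> linarith
    gcongr

/-- A radiating `C²` function with compactly supported Helmholtz source is the outgoing potential
of its source. -/
theorem outgoing_representation {κ : ℝ} (hκ : 0 < κ) {u : R2 → ℂ} (hu : ContDiff ℝ 2 u)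
    (hrad : IsRadiating κ u)
    (hsupp : HasCompactSupport fun y => laplacian2 u y + (κ : ℂ) ^ 2 * u y) {x : R2}
    (hx : x ∉ tsupport fun y => laplacian2 u y + (κ : ℂ) ^ 2 * u y) :
    (2 * π * outgoingResidue : ℂ) * u x
      = -∫ y, (laplacian2 u y + (κ : ℂ) ^ 2 * u y) * outgoingKernel κ x y := by
  set f : R2 → ℂ := fun y => laplacian2 u y + (κ : ℂ) ^ 2 * u y with hf
  have hfc : Continuous f := by
    have := continuous_laplacian2 hu
    have := hu.continuous
    fun_prop
  obtain ⟨ρ, hρ⟩ := hsupp.isCompact.isBounded.subset_closedBall (0 : R2)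
  rw [← add_eq_zero_iff_eq_neg, ← norm_le_zero_iff]
  refine le_of_forall_pos_le_add fun ε hε => ?_
  obtain ⟨T₀, hT₀, hT⟩ := exists_norm_integral_cutoff_le hκ hu hrad x hε
  set T : ℝ := max T₀ (max ρ ‖x‖ + 1) with hTdef
  have hTρ : ρ < T := (le_max_left ρ ‖x‖).trans_lt ((lt_add_one _).trans_le (le_max_right _ _))
  have hTx : ‖x‖ < T := (le_max_right ρ ‖x‖).trans_lt ((lt_add_one _).trans_le (le_max_right _ _))
  have hT0 : 0 < T := hT₀.trans_le (le_max_left _ _)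
  have hbound := hT T (le_max_left _ _)
  have hη := contDiff_radialCutoff T
  have hηc := hasCompactSupport_radialCutoff hT0
  set η := radialCutoff T with hηdef
  have hkd : ∀ y ∈ tsupport (fderiv ℝ η), ContDiffAt ℝ 1 (outgoingKernel κ x) y := by
    intro y hy
    refine contDiffAt_outgoingKernel hκ ?_
    rintro rfl
    have : T ≤ ‖y‖ := by simpa using tsupport_fderiv_radialCutoff_subset hT0 hy
    linarith
  rw [← integral_cutoff_commutator_mul hη hηc hu hkd] at hbound
  set g : R2 → ℂ := fun y => ∑ i : Fin 2, 2 * (fderiv ℝ η y (EuclideanSpace.single i 1)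
        * fderiv ℝ u y (EuclideanSpace.single i 1)) + u y * laplacian2 η y with hg
  have hηf : ∀ y, η y * f y = f y := fun y => by
    by_cases hy : y ∈ tsupport f
    · have : ‖y‖ ≤ ρ := by simpa using hρ hy
      rw [hηdef, radialCutoff_eq_one hT0 (this.trans hTρ.le), one_mul]
    · rw [image_eq_zero_of_notMem_tsupport hy, mul_zero]
  have hsrc : ∀ y, laplacian2 (fun z => η z * u z) y + (κ : ℂ) ^ 2 * (η y * u y) = f y + g y := by
    intro y
    rw [laplacian2_mul hη hu, ← hηf y, hf, hg]
    ring
  have hgz : ∀ y ∈ Metric.ball (0 : R2) T, g y = 0 := by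
    intro y hy
    have he : η =ᶠ[𝓝 y] fun _ => 1 := by
      filter_upwards [Metric.isOpen_ball.mem_nhds hy] with z hz
      exact radialCutoff_eq_one hT0 (mem_ball_zero_iff.1 hz).le
    have hl : laplacian2 η y = 0 := by
      rw [laplacian2_congr he]
      simp [laplacian2]
    simp [hg, hl, he.fderiv_eq]
  have hsrc' : (fun y => laplacian2 (fun z => η z * u z) y + (κ : ℂ) ^ 2 * (η y * u y))
      = fun y => f y + g y := funext hsrc
  have hxg : x ∉ tsupport g := by
    rw [notMem_tsupport_iff_eventuallyEq]
    filter_upwards [Metric.isOpen_ball.mem_nhds (mem_ball_zero_iff.2 hTx)] with z hz using hgz z hz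
  have hxfg : x ∉ tsupport fun y => f y + g y := by
    rw [notMem_tsupport_iff_eventuallyEq] at hx hxg ⊢
    filter_upwards [hx, hxg] with z h1 h2
    simp_all
  have hrep := outgoing_representation_of_hasCompactSupport hκ (hη.mul hu) hηc.mul_right (x := x)
    (by rw [hsrc']; exact hxfg)
  simp only [hsrc] at hrep
  have hgc : Continuous g := by
    have : g = fun y => laplacian2 (fun z => η z * u z) y + (κ : ℂ) ^ 2 * (η y * u y) - f y := by
      funext y; rw [hsrc]; ring
    rw [this]
    have h1 := continuous_laplacian2 (hη.mul hu)
    have h2 := (hη.mul hu).continuous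
    fun_prop
  have hgsupp : HasCompactSupport g := by
    refine HasCompactSupport.of_support_subset_isCompact (isCompact_closedBall 0 (2 * T)) ?_
    intro y hy
    by_contra hout
    have hnt : y ∉ tsupport η := fun h => hout (tsupport_radialCutoff_subset hT0 h)
    have he := notMem_tsupport_iff_eventuallyEq.1 hnt
    refine hy ?_
    have hz : fderiv ℝ η y = 0 :=
      image_eq_zero_of_notMem_tsupport fun h => hnt (tsupport_fderiv_subset ℝ h)
    simp [hg, laplacian2_eq_zero_of_notMem_tsupport hnt, hz]
  have hif : Integrable fun y => f y * outgoingKernel κ x y :=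
    (continuous_mul_outgoing_norm hκ hfc hx).integrable_of_hasCompactSupport hsupp.mul_right
  have hig : Integrable fun y => g y * outgoingKernel κ x y :=
    (continuous_mul_outgoing_norm hκ hgc hxg).integrable_of_hasCompactSupport hgsupp.mul_right
  have hsum : ∫ y, (f y + g y) * outgoing ((κ * ‖y - x‖ : ℝ) : ℂ)
      = (∫ y, f y * outgoingKernel κ x y) + ∫ y, g y * outgoingKernel κ x y := by
    rw [← integral_add hif hig]
    refine integral_congr_ae (Eventually.of_forall fun y => ?_)
    simp only [outgoingKernel]
    ring
  have hηx : η x = 1 := radialCutoff_eq_one hT0 hTx.le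
  rw [hsum, hηx, one_mul] at hrep
  rw [hrep, zero_add]
  refine le_trans (le_of_eq ?_) hbound
  rw [← norm_neg]
  congr 1
  ring

/-! ### The complexified distance along a line -/

/-- The principal square root, holomorphic on the slit plane. -/
def principalSqrt (w : ℂ) : ℂ := Complex.exp (Complex.log w / 2)

theorem differentiableAt_principalSqrt {w : ℂ} (hw : w ∈ Complex.slitPlane) :
    DifferentiableAt ℂ principalSqrt w :=
  ((Complex.differentiableAt_log hw).div_const 2).cexp

theorem principalSqrt_sq {w : ℂ} (hw : w ∈ Complex.slitPlane) : principalSqrt w ^ 2 = w := by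
  rw [principalSqrt, ← Complex.exp_nat_mul]
  push_cast
  rw [mul_div_cancel₀ _ two_ne_zero, Complex.exp_log (Complex.slitPlane_ne_zero hw)]

theorem principalSqrt_re_pos {w : ℂ} (hw : w ∈ Complex.slitPlane) : 0 < (principalSqrt w).re := by
  rw [principalSqrt, Complex.exp_re]
  refine mul_pos (Real.exp_pos _) (Real.cos_pos_of_mem_Ioo ?_)
  have h1 := Complex.neg_pi_lt_arg w
  have h2 := lt_of_le_of_ne (Complex.arg_le_pi w) (Complex.mem_slitPlane_iff_arg.1 hw).1
  have h3 : (Complex.log w / 2).im = w.arg / 2 := by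
    rw [Complex.div_ofNat_im, Complex.log_im]
  rw [h3]
  constructor <;> linarith

theorem principalSqrt_ofReal_sq {r : ℝ} (hr : 0 < r) : principalSqrt ((r : ℂ) ^ 2) = r := by
  have h : Complex.log ((r : ℂ) ^ 2) = ((Real.log (r ^ 2) : ℝ) : ℂ) := by
    rw [Complex.ofReal_log (by positivity)]
    push_cast
    rfl
  rw [principalSqrt, h, Real.log_pow]
  push_cast
  rw [mul_div_cancel_left₀ _ two_ne_zero, ← Complex.ofReal_exp, Real.exp_log hr]

theorem add_sq_mem_slitPlane {ζ : ℂ} (hζ : 0 < ζ.re) {b : ℝ} (hb : 0 ≤ b) :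
    ζ ^ 2 + (b : ℂ) ∈ Complex.slitPlane := by
  rw [Complex.mem_slitPlane_iff]
  by_cases h : ζ.im = 0
  · left
    simp [pow_two, h]
    nlinarith
  · right
    have : (ζ ^ 2 + (b : ℂ)).im = 2 * (ζ.re * ζ.im) := by simp [pow_two]; ring
    rw [this]
    exact mul_ne_zero two_ne_zero (mul_ne_zero hζ.ne' h)

theorem re_le_principalSqrt_re {ζ : ℂ} (hζ : 0 < ζ.re) {b : ℝ} (hb : 0 ≤ b) :
    ζ.re ≤ (principalSqrt (ζ ^ 2 + (b : ℂ))).re := by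
  have hmem := add_sq_mem_slitPlane hζ hb
  set ρ := principalSqrt (ζ ^ 2 + (b : ℂ))
  have hpos : 0 < ρ.re := principalSqrt_re_pos hmem
  have hsq : ρ ^ 2 = ζ ^ 2 + b := principalSqrt_sq hmem
  have hre := congrArg Complex.re hsq
  have him := congrArg Complex.im hsq
  simp [pow_two] at hre him
  have him' : ρ.re * ρ.im = ζ.re * ζ.im := by linarith
  by_contra! hlt
  have h1 : ρ.re ^ 2 < ζ.re ^ 2 := by gcongr
  have h2 : ρ.im ^ 2 < ζ.im ^ 2 := by nlinarith
  have h3 : (ρ.re * ρ.im) ^ 2 = (ζ.re * ζ.im) ^ 2 := by rw [him']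
  nlinarith [mul_nonneg (sq_nonneg ρ.re) (sub_nonneg.2 h2.le), sq_nonneg ζ.im, sq_nonneg ρ.im,
    mul_pos (sub_pos.2 h1) (lt_of_le_of_lt (sq_nonneg ρ.im) h2)]

theorem im_sub_le_principalSqrt_im {ζ : ℂ} (hζ : 1 ≤ ζ.re) {b : ℝ} (hb : 0 ≤ b) :
    ζ.im - b ≤ (principalSqrt (ζ ^ 2 + (b : ℂ))).im := by
  have hmem := add_sq_mem_slitPlane (by linarith) hb (ζ := ζ)
  have hre := re_le_principalSqrt_re (by linarith) hb (ζ := ζ)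
  set ρ := principalSqrt (ζ ^ 2 + (b : ℂ))
  have hsq : ρ ^ 2 = ζ ^ 2 + b := principalSqrt_sq hmem
  have hfac : ‖ρ - ζ‖ * ‖ρ + ζ‖ = b := by
    rw [← norm_mul, show (ρ - ζ) * (ρ + ζ) = (b : ℂ) by linear_combination hsq,
      Complex.norm_real, Real.norm_of_nonneg hb]
  have h1 : 1 ≤ ‖ρ + ζ‖ := by
    have := Complex.re_le_norm (ρ + ζ)
    rw [Complex.add_re] at this
    linarith
  have h2 : ‖ρ - ζ‖ ≤ b := by nlinarith [norm_nonneg (ρ - ζ)]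
  have h3 := (abs_le.1 (Complex.abs_im_le_norm (ρ - ζ))).1
  rw [Complex.sub_im] at h3
  linarith

/-- The holomorphic extension in `s` of the squared distance from `p + s θ` to `y`. -/
def lineDistSq (p θ y : R2) (z : ℂ) : ℂ :=
  z ^ 2 - 2 * z * (inner ℝ (y - p) θ : ℝ) + ((‖y - p‖ ^ 2 : ℝ) : ℂ)

theorem lineDistSq_ofReal {p θ : R2} (hθ : ‖θ‖ = 1) (y : R2) (s : ℝ) :
    lineDistSq p θ y s = ((‖y - (p + s • θ)‖ : ℝ) : ℂ) ^ 2 := by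
  have h : ‖y - (p + s • θ)‖ ^ 2 = ‖y - p‖ ^ 2 - 2 * s * inner ℝ (y - p) θ + s ^ 2 := by
    rw [← sub_sub, norm_sub_sq_real, inner_smul_right, norm_smul, hθ, Real.norm_eq_abs, mul_one,
      sq_abs]
    ring
  rw [← Complex.ofReal_pow, h, lineDistSq]
  push_cast
  ring

theorem lineDistSq_eq {p θ y : R2} (z : ℂ) : lineDistSq p θ y z
    = (z - (inner ℝ (y - p) θ : ℝ)) ^ 2 + ((‖y - p‖ ^ 2 - inner ℝ (y - p) θ ^ 2 : ℝ) : ℂ) := by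
  rw [lineDistSq]
  push_cast
  ring

theorem continuous_lineDistSq (p θ : R2) :
    Continuous fun q : ℂ × R2 => lineDistSq p θ q.2 q.1 := by
  unfold lineDistSq
  fun_prop

/-! ### Holomorphic extension of outgoing potentials -/

/-- The holomorphic extension of an outgoing potential along the line through `p` with
direction `θ`. -/
def outgoingPotential (κ : ℝ) (p θ : R2) (f : R2 → ℂ) (z : ℂ) : ℂ :=
  ∫ y, f y * outgoing (κ * principalSqrt (lineDistSq p θ y z))

theorem outgoingPotential_ofReal {κ : ℝ} {p θ : R2} (hθ : ‖θ‖ = 1) {f : R2 → ℂ} {s : ℝ}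
    (hs : p + s • θ ∉ tsupport f) :
    outgoingPotential κ p θ f s = ∫ y, f y * outgoingKernel κ (p + s • θ) y := by
  refine integral_congr_ae (Eventually.of_forall fun y => ?_)
  by_cases hy : y = p + s • θ
  · subst hy
    simp [image_eq_zero_of_notMem_tsupport hs]
  · have hpos : 0 < ‖y - (p + s • θ)‖ := norm_pos_iff.2 (sub_ne_zero.2 hy)
    simp only [outgoingKernel]
    rw [lineDistSq_ofReal hθ, principalSqrt_ofReal_sq hpos]
    push_cast
    rfl

theorem differentiableOn_outgoingPotential {κ : ℝ} (hκ : 0 < κ) {p θ : R2} {f : R2 → ℂ}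
    (hf : Continuous f) (hfc : HasCompactSupport f) {Ω : Set ℂ} (hΩ : IsOpen Ω)
    (hslit : ∀ z ∈ Ω, ∀ y ∈ tsupport f, lineDistSq p θ y z ∈ Complex.slitPlane) :
    DifferentiableOn ℂ (outgoingPotential κ p θ f) Ω := by
  have hcomp : ∀ w ∈ Complex.slitPlane, DifferentiableAt ℂ
      (fun w => outgoing (κ * principalSqrt w)) w := fun w hw => by
    have hre : 0 < ((κ : ℂ) * principalSqrt w).re := by
      rw [Complex.re_ofReal_mul]
      exact mul_pos hκ (principalSqrt_re_pos hw)
    exact (hasDerivAt_outgoing hre).differentiableAt.comp w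
      ((differentiableAt_principalSqrt hw).const_mul _)
  have hjoint : ∀ z ∈ Ω, ∀ y ∈ tsupport f, ContinuousAt
      (fun q : ℂ × R2 => f q.2 * outgoing (κ * principalSqrt (lineDistSq p θ q.2 q.1))) (z, y) := by
    intro z hz y hy
    refine (hf.comp continuous_snd).continuousAt.mul ?_
    exact ContinuousAt.comp (f := fun q : ℂ × R2 => lineDistSq p θ q.2 q.1)
      (g := fun w => outgoing (κ * principalSqrt w)) (hcomp _ (hslit z hz y hy)).continuousAt
      (continuous_lineDistSq p θ).continuousAt
  refine differentiableOn_integral_of_locally_dominated hΩ (fun z hz => ?_) (fun y => ?_)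
    (fun z hz => ?_)
  · refine Continuous.aestronglyMeasurable (continuous_of_tsupport fun y hy => ?_)
    exact ContinuousAt.comp (f := fun y : R2 => (z, y))
      (hjoint z hz y (tsupport_mul_subset_left hy)) (by fun_prop)
  · by_cases hy : y ∈ tsupport f
    · intro z hz
      refine DifferentiableAt.differentiableWithinAt ((DifferentiableAt.comp z
        (hcomp _ (hslit z hz y hy)) ?_).const_mul _)
      unfold lineDistSq
      fun_prop
    · simp [image_eq_zero_of_notMem_tsupport hy]
  · obtain ⟨δ, hδ, hball⟩ := Metric.nhds_basis_closedBall.mem_iff.1 (hΩ.mem_nhds hz)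
    have hK : IsCompact (Metric.closedBall z δ ×ˢ tsupport f) :=
      (isCompact_closedBall z δ).prod hfc.isCompact
    obtain ⟨C, hC⟩ := hK.exists_bound_of_continuousOn (fun q hq =>
      (hjoint q.1 (hball hq.1) q.2 hq.2).continuousWithinAt)
    refine ⟨_, Metric.closedBall_mem_nhds z hδ, (tsupport f).indicator fun _ => C,
      (integrableOn_const hfc.isCompact.measure_lt_top.ne).integrable_indicator
        (isClosed_tsupport f).measurableSet, fun w hw y => ?_⟩
    by_cases hy : y ∈ tsupport f
    · rw [indicator_of_mem hy]
      exact hC (w, y) ⟨hw, hy⟩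
    · simp [indicator_of_notMem hy, image_eq_zero_of_notMem_tsupport hy]

theorem exists_norm_outgoingPotential_le {κ : ℝ} (hκ : 0 < κ) {p θ : R2} (hθ : ‖θ‖ = 1)
    {f : R2 → ℂ} (hf : Continuous f) (hfc : HasCompactSupport f) {S : ℝ}
    (hS : ∀ y ∈ tsupport f, ‖y - p‖ ≤ S) :
    ∃ C, ∀ z : ℂ, S + 1 ≤ z.re →
      ‖outgoingPotential κ p θ f z‖ ≤ C * Real.exp (-(κ * z.im)) := by
  set B : ℝ := momentBound 0 / √κ * Real.exp (κ * S ^ 2) with hB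
  have hM := momentBound_nonneg 0
  refine ⟨(∫ y, ‖f y‖) * B, fun z hz => ?_⟩
  have hintegrable : Integrable fun y => ‖f y‖ := (hf.integrable_of_hasCompactSupport hfc).norm
  have hpt : ∀ y, ‖f y * outgoing (κ * principalSqrt (lineDistSq p θ y z))‖
      ≤ ‖f y‖ * (B * Real.exp (-(κ * z.im))) := by
    intro y
    by_cases hy : y ∈ tsupport f
    swap
    · simp [image_eq_zero_of_notMem_tsupport hy]
    rw [norm_mul]
    gcongr
    set a : ℝ := inner ℝ (y - p) θ with ha
    have haabs : |a| ≤ ‖y - p‖ := by simpa [hθ] using abs_real_inner_le_norm (y - p) θ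
    set b : ℝ := ‖y - p‖ ^ 2 - a ^ 2 with hb
    have hb0 : 0 ≤ b := by
      rw [hb, sub_nonneg, ← sq_abs a]
      gcongr
    have hbS : b ≤ S ^ 2 := by
      have h1 : ‖y - p‖ ^ 2 ≤ S ^ 2 := by
        gcongr
        exact hS y hy
      nlinarith
    have hζ : 1 ≤ (z - (a : ℂ)).re := by
      rw [Complex.sub_re, Complex.ofReal_re]
      have := (abs_le.1 (haabs.trans (hS y hy))).2
      linarith
    rw [lineDistSq_eq]
    have hre := re_le_principalSqrt_re (by linarith) hb0 (ζ := z - (a : ℂ))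
    have him := im_sub_le_principalSqrt_im hζ hb0
    set ρ := principalSqrt ((z - (a : ℂ)) ^ 2 + (b : ℂ))
    rw [Complex.sub_im, Complex.ofReal_im, sub_zero] at him
    have hwre : ((κ : ℂ) * ρ).re = κ * ρ.re := Complex.re_ofReal_mul _ _
    have hwim : ((κ : ℂ) * ρ).im = κ * ρ.im := Complex.im_ofReal_mul _ _
    have hρ1 : 1 ≤ ρ.re := hζ.trans hre
    have hk := norm_outgoing_le (w := (κ : ℂ) * ρ) (by rw [hwre]; positivity)
    rw [hwre, hwim] at hk
    have hsq : √κ ≤ √(κ * ρ.re) := Real.sqrt_le_sqrt (by nlinarith)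
    have hsκ : 0 < √κ := Real.sqrt_pos.2 hκ
    have hexp : Real.exp (-(κ * ρ.im)) ≤ Real.exp (κ * S ^ 2) * Real.exp (-(κ * z.im)) := by
      rw [← Real.exp_add]
      refine Real.exp_le_exp.2 ?_
      nlinarith
    have h1 : √κ * ‖outgoing ((κ : ℂ) * ρ)‖
        ≤ momentBound 0 * (Real.exp (κ * S ^ 2) * Real.exp (-(κ * z.im))) :=
      (mul_le_mul_of_nonneg_right hsq (norm_nonneg _)).trans (hk.trans (by gcongr))
    rw [hB, div_mul_eq_mul_div, div_mul_eq_mul_div, le_div_iff₀ hsκ]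
    linarith
  refine (norm_integral_le_of_norm_le (hintegrable.mul_const _) (Eventually.of_forall hpt)).trans ?_
  rw [integral_mul_const]
  exact (mul_assoc _ _ _).ge

theorem outgoingResidue_const_ne_zero : (2 * π * outgoingResidue : ℂ) ≠ 0 := by
  have h := outgoingResidue_pos
  have h2 : (2 * π * outgoingResidue : ℂ) = ((2 * π * outgoingResidue : ℝ) : ℂ) := by push_cast; rfl
  rw [h2, Complex.ofReal_ne_zero]
  positivity

theorem abs_inner_sub_le {p θ : R2} (hθ : ‖θ‖ = 1) (y : R2) : |inner ℝ (y - p) θ| ≤ ‖y - p‖ := by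
  simpa [hθ] using abs_real_inner_le_norm (y - p) θ

theorem lineDistSq_mem_slitPlane_of_lt_re {p θ y : R2} (hθ : ‖θ‖ = 1) {z : ℂ}
    (hz : ‖y - p‖ < z.re) : lineDistSq p θ y z ∈ Complex.slitPlane := by
  have ha := abs_inner_sub_le hθ y (p := p)
  rw [lineDistSq_eq]
  refine add_sq_mem_slitPlane ?_ ?_
  · rw [Complex.sub_re, Complex.ofReal_re]
    linarith [(abs_le.1 ha).2]
  · rw [sub_nonneg, ← sq_abs (inner ℝ (y - p) θ)]
    gcongr

theorem lineDistSq_mem_slitPlane_of_norm_lt {p θ y : R2} (hθ : ‖θ‖ = 1) {z : ℂ}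
    (hz : 4 * ‖z‖ < ‖y - p‖) : lineDistSq p θ y z ∈ Complex.slitPlane := by
  have ha := abs_inner_sub_le hθ y (p := p)
  refine Complex.mem_slitPlane_iff.2 (Or.inl ?_)
  set a : ℝ := inner ℝ (y - p) θ with hadef
  have hre : (lineDistSq p θ y z).re = (z ^ 2).re - 2 * (z.re * a) + ‖y - p‖ ^ 2 := by
    simp only [lineDistSq, ← hadef, Complex.add_re, Complex.sub_re, Complex.ofReal_re]
    rw [mul_assoc, Complex.mul_re, Complex.re_mul_ofReal]
    simp
  have h1 : -(‖z‖ ^ 2) ≤ (z ^ 2).re := by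
    have := (abs_le.1 (Complex.abs_re_le_norm (z ^ 2))).1
    rwa [norm_pow] at this
  have h2 : z.re * a ≤ ‖z‖ * ‖y - p‖ := by
    refine (le_abs_self _).trans ?_
    rw [abs_mul]
    gcongr
    exact Complex.abs_re_le_norm z
  have h0 := norm_nonneg z
  rw [hre]
  nlinarith

/-- A solution of the Helmholtz equation is real analytic along every line. -/
theorem analyticAt_comp_line {κ : ℝ} (hκ : 0 < κ) {U : Set R2} (hU : IsOpen U) {ψ : R2 → ℂ}
    (hψ : ContDiffOn ℝ 2 ψ U) (heq : ∀ x ∈ U, laplacian2 ψ x + (κ : ℂ) ^ 2 * ψ x = 0)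
    {p θ : R2} (hθ : ‖θ‖ = 1) (hp : p ∈ U) :
    AnalyticAt ℝ (fun s : ℝ => ψ (p + s • θ)) 0 := by
  obtain ⟨ε, hε, hball⟩ := Metric.isOpen_iff.1 hU p hp
  set δ : ℝ := ε / 3 with hδdef
  have hδ : 0 < δ := by positivity
  let χ : ContDiffBump p := ⟨δ, 2 * δ, hδ, by linarith⟩
  set u : R2 → ℂ := fun y => ((χ y : ℝ) : ℂ) * ψ y with hu
  have hχ : ContDiff ℝ 2 fun y => ((χ y : ℝ) : ℂ) :=
    Complex.ofRealCLM.contDiff.comp χ.contDiff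
  have htχ : tsupport u ⊆ Metric.closedBall p (2 * δ) := by
    refine (closure_minimal ?_ Metric.isClosed_closedBall)
    intro y hy
    by_contra hy2
    refine hy ?_
    have : χ y = 0 := χ.zero_of_le_dist (not_le.1 hy2).le
    simp [hu, this]
  have hsub : Metric.closedBall p (2 * δ) ⊆ U := fun y hy => hball <| by
    rw [Metric.mem_closedBall] at hy
    rw [Metric.mem_ball]
    linarith
  have hu2 : ContDiff ℝ 2 u := contDiff_of_forall_mem_tsupport fun y hy =>
    hχ.contDiffAt.mul (hψ.contDiffAt (hU.mem_nhds (hsub (htχ hy))))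
  have huc : HasCompactSupport u :=
    (isCompact_closedBall p (2 * δ)).of_isClosed_subset (isClosed_tsupport u) htχ
  set f : R2 → ℂ := fun y => laplacian2 u y + (κ : ℂ) ^ 2 * u y with hf
  have hfcont : Continuous f :=
    (continuous_laplacian2 hu2).add (continuous_const.mul hu2.continuous)
  have hfc : HasCompactSupport f := HasCompactSupport.intro huc fun y hy => by
    simp [hf, laplacian2_eq_zero_of_notMem_tsupport hy, image_eq_zero_of_notMem_tsupport hy]
  have huψ : ∀ y ∈ Metric.ball p δ, u y = ψ y := fun y hy => by
    have : χ y = 1 := χ.one_of_mem_closedBall (Metric.ball_subset_closedBall hy)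
    simp [hu, this]
  have hball_nhds : ∀ y ∈ Metric.ball p δ, Metric.ball p δ ∈ 𝓝 y :=
    fun y hy => Metric.isOpen_ball.mem_nhds hy
  have hf0 : ∀ y ∈ Metric.ball p δ, f y = 0 := fun y hy => by
    have hyU : y ∈ U := hsub (Metric.closedBall_subset_closedBall (by linarith)
      (Metric.ball_subset_closedBall hy))
    have he : u =ᶠ[𝓝 y] ψ := eventually_of_mem (hball_nhds y hy) huψ
    simp only [hf]
    rw [laplacian2_congr he, he.eq_of_nhds]
    exact heq y hyU
  have hft : ∀ y ∈ Metric.ball p δ, y ∉ tsupport f := fun y hy =>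
    notMem_tsupport_iff_eventuallyEq.2 (eventually_of_mem (hball_nhds y hy) hf0)
  have hdiff := differentiableOn_outgoingPotential hκ hfcont hfc (p := p) (θ := θ)
    (Ω := Metric.ball 0 (δ / 4)) Metric.isOpen_ball fun z hz y hy => by
      refine lineDistSq_mem_slitPlane_of_norm_lt hθ ?_
      have h1 : δ ≤ ‖y - p‖ := by
        rw [← dist_eq_norm]
        by_contra h
        exact hft y (not_le.1 h) hy
      rw [mem_ball_zero_iff] at hz
      linarith
  have han : AnalyticAt ℂ (outgoingPotential κ p θ f) ((0 : ℝ) : ℂ) := by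
    rw [Complex.ofReal_zero]
    exact hdiff.analyticAt (Metric.ball_mem_nhds 0 (by positivity))
  have hre : AnalyticAt ℝ (fun s : ℝ => outgoingPotential κ p θ f (s : ℂ)) 0 :=
    AnalyticAt.fun_comp (han.restrictScalars (𝕜 := ℝ)) (Complex.ofRealCLM.analyticAt 0)
  refine ((analyticAt_const (v := -(2 * π * outgoingResidue : ℂ)⁻¹)).mul hre).congr ?_
  filter_upwards [Metric.ball_mem_nhds (0 : ℝ) hδ] with s hs
  have hmem : p + s • θ ∈ Metric.ball p δ := by
    simpa [norm_smul, hθ, Metric.mem_ball, dist_eq_norm] using hs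
  have hrep := outgoing_representation_of_hasCompactSupport hκ hu2 huc (hft _ hmem)
  have hpot := outgoingPotential_ofReal (κ := κ) hθ (hft _ hmem)
  simp only [outgoingKernel] at hpot
  rw [← hpot, huψ _ hmem] at hrep
  simp only [Pi.mul_apply]
  rw [neg_mul, ← mul_neg, ← hrep, inv_mul_cancel_left₀ outgoingResidue_const_ne_zero]

/-- Far along a ray, a radiation solution extends holomorphically to a half-plane, with
exponential control in the imaginary direction. -/
theorem IsRadiationSolution.exists_holomorphic_extension {κ : ℝ} (hκ : 0 < κ) {U : Set R2}
    (hU : IsOpen U) (hK : IsCompact Uᶜ) {ψ : R2 → ℂ} (hψ : IsRadiationSolution κ U ψ) (p : R2)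
    {θ : R2} (hθ : ‖θ‖ = 1) :
    ∃ (S C : ℝ) (G : ℂ → ℂ), 0 ≤ S ∧ DifferentiableOn ℂ G {z | S < z.re} ∧
      (∀ z : ℂ, S < z.re → ‖G z‖ ≤ C * Real.exp (-(κ * z.im))) ∧
      ∀ s : ℝ, S < s → G s = ψ (p + s • θ) := by
  obtain ⟨hψ2, heq, hsom⟩ := hψ
  obtain ⟨R, hR0, hKR⟩ := hK.isBounded.subset_ball_lt 0 (0 : R2)
  let χ : ContDiffBump (0 : R2) := ⟨R, R + 1, hR0, by linarith⟩
  set u : R2 → ℂ := fun y => (1 - ((χ y : ℝ) : ℂ)) * ψ y with hu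
  have hχ : ContDiff ℝ 2 fun y => 1 - ((χ y : ℝ) : ℂ) :=
    contDiff_const.sub (Complex.ofRealCLM.contDiff.comp χ.contDiff)
  have hUR : ∀ y : R2, R + 1 < ‖y‖ → y ∈ U := fun y hy => by
    by_contra h
    have := mem_ball_zero_iff.1 (hKR h)
    linarith
  have hu2 : ContDiff ℝ 2 u := contDiff_iff_contDiffAt.2 fun y => by
    by_cases hy : y ∈ U
    · exact hχ.contDiffAt.mul (hψ2.contDiffAt (hU.mem_nhds hy))
    · refine (contDiffAt_const (c := (0 : ℂ))).congr_of_eventuallyEq ?_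
      filter_upwards [Metric.isOpen_ball.mem_nhds (hKR hy)] with w hw
      have : χ w = 1 := χ.one_of_mem_closedBall (Metric.ball_subset_closedBall hw)
      simp [hu, this]
  have huψ : ∀ y : R2, R + 1 < ‖y‖ → u =ᶠ[𝓝 y] ψ := fun y hy => by
    filter_upwards [(isOpen_lt continuous_const continuous_norm).mem_nhds hy] with w hw
    have : χ w = 0 := χ.zero_of_le_dist (by simpa using (le_of_lt hw))
    simp [hu, this]
  have hrad : IsRadiating κ u := fun ε hε => by
    obtain ⟨R', hR', h⟩ := hsom ε hε
    refine ⟨max R' (R + 2), lt_max_of_lt_left hR', fun x hx => ?_⟩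
    have hx1 : R + 1 < ‖x‖ := by linarith [(le_max_right R' (R + 2)).trans hx]
    rw [(huψ x hx1).fderiv_eq, (huψ x hx1).eq_of_nhds]
    exact h x (hUR x hx1) ((le_max_left _ _).trans hx)
  set f : R2 → ℂ := fun y => laplacian2 u y + (κ : ℂ) ^ 2 * u y with hf
  have hfcont : Continuous f :=
    (continuous_laplacian2 hu2).add (continuous_const.mul hu2.continuous)
  have htf : tsupport f ⊆ Metric.closedBall 0 (R + 1) := by
    refine closure_minimal (fun y hy => ?_) Metric.isClosed_closedBall
    by_contra h
    rw [mem_closedBall_zero_iff, not_le] at h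
    refine hy ?_
    simp only [hf]
    rw [laplacian2_congr (huψ y h), (huψ y h).eq_of_nhds]
    exact heq y (hUR y h)
  have hfc : HasCompactSupport f :=
    (isCompact_closedBall 0 (R + 1)).of_isClosed_subset (isClosed_tsupport f) htf
  set S : ℝ := R + 1 + ‖p‖ with hSdef
  have hS : ∀ y ∈ tsupport f, ‖y - p‖ ≤ S := fun y hy =>
    (norm_sub_le y p).trans (by linarith [mem_closedBall_zero_iff.1 (htf hy)])
  obtain ⟨C, hC⟩ := exists_norm_outgoingPotential_le hκ hθ hfcont hfc hS
  set c : ℂ := (2 * π * outgoingResidue : ℂ) with hc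
  refine ⟨S + 1, ‖c⁻¹‖ * C, fun z => -(c⁻¹ * outgoingPotential κ p θ f z), by positivity, ?_,
    fun z hz => ?_, fun s hs => ?_⟩
  · refine (DifferentiableOn.const_mul ?_ _).neg
    refine differentiableOn_outgoingPotential hκ hfcont hfc
      (isOpen_lt continuous_const Complex.continuous_re) fun z hz y hy => ?_
    have hz' : S + 1 < z.re := hz
    exact lineDistSq_mem_slitPlane_of_lt_re hθ (by linarith [hS y hy])
  · rw [norm_neg, norm_mul, mul_assoc]
    exact mul_le_mul_of_nonneg_left (hC z hz.le) (norm_nonneg _)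
  · have hnorm : R + 1 < ‖p + s • θ‖ := by
      have h1 : ‖s • θ‖ = s := by
        rw [norm_smul, hθ, mul_one, Real.norm_of_nonneg (by linarith [norm_nonneg p])]
      have h2 := norm_sub_le (p + s • θ) p
      rw [add_sub_cancel_left, h1] at h2
      linarith
    have hns : p + s • θ ∉ tsupport f := fun h => by
      linarith [mem_closedBall_zero_iff.1 (htf h)]
    have hrep := outgoing_representation hκ hu2 hrad hfc hns
    rw [← outgoingPotential_ofReal hθ hns, (huψ _ hnorm).eq_of_nhds] at hrep
    simp only
    rw [← mul_neg, ← hrep, inv_mul_cancel_left₀ outgoingResidue_const_ne_zero]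

theorem eqOn_conj_of_im_eq_zero {S : ℝ} {G : ℂ → ℂ} (hG : DifferentiableOn ℂ G {z | S < z.re})
    (him : ∀ s : ℝ, S < s → (G s).im = 0) {z : ℂ} (hz : S < z.re) :
    G z = star (G (star z)) := by
  have hopen : IsOpen {z : ℂ | S < z.re} := isOpen_lt continuous_const Complex.continuous_re
  have hconj : DifferentiableOn ℂ (star ∘ G ∘ star) {z : ℂ | S < z.re} := fun w hw => by
    have h : DifferentiableAt ℂ G (star w) :=
      hG.differentiableAt (hopen.mem_nhds (by simpa using hw))
    have h2 := h.conj_conj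
    rw [Complex.star_def, Complex.conj_conj] at h2
    exact h2.differentiableWithinAt
  have hfreq : ∃ᶠ w in 𝓝[≠] ((S + 1 : ℝ) : ℂ), G w = (star ∘ G ∘ star) w := by
    have ht : Tendsto (fun s : ℝ => (s : ℂ)) (𝓝[>] (S + 1)) (𝓝[≠] ((S + 1 : ℝ) : ℂ)) :=
      tendsto_nhdsWithin_of_tendsto_nhds_of_eventually_within _
        (Complex.continuous_ofReal.continuousAt.tendsto.mono_left nhdsWithin_le_nhds)
        (eventually_nhdsWithin_of_forall fun s hs =>
          fun h => (ne_of_gt hs) (Complex.ofReal_injective h))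
    refine ht.frequently (Eventually.frequently (eventually_nhdsWithin_of_forall fun s hs => ?_))
    have hs' : S < s := by
      have : S + 1 < s := hs
      linarith
    simp only [Function.comp_apply, Complex.star_def, Complex.conj_ofReal]
    exact (Complex.conj_eq_iff_im.2 (him s hs')).symm
  exact (hG.analyticOnNhd hopen).eqOn_of_preconnected_of_frequently_eq (hconj.analyticOnNhd hopen)
    (convex_halfSpace_re_gt S).isPreconnected (by simp) hfreq hz

/-- A holomorphic function on a half-plane that decays exponentially in the imaginary direction
decays at an arbitrarily fast exponential rate along the real axis, hence vanishes there. -/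
theorem eq_zero_of_norm_le_exp_abs_im {κ : ℝ} (hκ : 0 < κ) {S C : ℝ} {G : ℂ → ℂ}
    (hG : DifferentiableOn ℂ G {z | S < z.re})
    (hb : ∀ z : ℂ, S < z.re → ‖G z‖ ≤ C * Real.exp (-(κ * |z.im|))) {s : ℝ} (hs : S < s) :
    G s = 0 := by
  have hopen : IsOpen {z : ℂ | S < z.re} := isOpen_lt continuous_const Complex.continuous_re
  have hC : 0 ≤ C := by
    have h := (norm_nonneg _).trans (hb s (by simpa using hs))
    exact nonneg_of_mul_nonneg_left h (Real.exp_pos _)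
  have key : ∀ T : ℝ, 0 < T → ‖G s‖ ≤ C * Real.exp (-(κ * T * (s - S))) := by
    intro T hT
    set α : ℝ := Real.arctan T with hα
    have hα0 : 0 < α := Real.arctan_pos.2 hT
    have hα2 : α < π / 2 := Real.arctan_lt_pi_div_two T
    have hsin : Real.sin α = T * Real.cos α := by
      have h := Real.tan_arctan T
      rw [Real.tan_eq_sin_div_cos, div_eq_iff (Real.cos_arctan_pos T).ne'] at h
      exact h
    set F : ℂ → ℂ := fun w => G (S + Complex.exp w) * Complex.exp ((κ * T : ℝ) * Complex.exp w)
      with hF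
    have hcos : ∀ w : ℂ, w.im ∈ Icc (-α) α → 0 < Real.cos w.im := fun w hw =>
      Real.cos_pos_of_mem_Ioo ⟨by linarith [hw.1], by linarith [hw.2]⟩
    have hre : ∀ w : ℂ, w.im ∈ Icc (-α) α → S < ((S : ℂ) + Complex.exp w).re := fun w hw => by
      rw [Complex.add_re, Complex.ofReal_re, Complex.exp_re]
      have := mul_pos (Real.exp_pos w.re) (hcos w hw)
      linarith
    have hclos : closure (Complex.im ⁻¹' Ioo (-α) α) ⊆ Complex.im ⁻¹' Icc (-α) α :=
      closure_minimal (preimage_mono Ioo_subset_Icc_self)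
        (isClosed_Icc.preimage Complex.continuous_im)
    have hdiff : DiffContOnCl ℂ F (Complex.im ⁻¹' Ioo (-α) α) := by
      refine DifferentiableOn.diffContOnCl fun w hw => ?_
      have h1 : DifferentiableAt ℂ G (S + Complex.exp w) :=
        hG.differentiableAt (hopen.mem_nhds (hre w (hclos hw)))
      have h2 : DifferentiableAt ℂ (fun w => G (S + Complex.exp w)) w :=
        h1.comp w (by fun_prop)
      exact (h2.mul (by fun_prop)).differentiableWithinAt
    have hFb : ∀ w : ℂ, w.im ∈ Icc (-α) α → ‖F w‖ ≤ C * Real.exp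
        (Real.exp w.re * (κ * T * Real.cos w.im - κ * |Real.sin w.im|)) := fun w hw => by
      have h1 := hb _ (hre w hw)
      rw [Complex.add_im, Complex.ofReal_im, zero_add, Complex.exp_im, abs_mul,
        abs_of_pos (Real.exp_pos _)] at h1
      simp only [hF]
      rw [norm_mul, Complex.norm_exp, Complex.re_ofReal_mul, Complex.exp_re]
      calc _ ≤ C * Real.exp (-(κ * (Real.exp w.re * |Real.sin w.im|)))
            * Real.exp (κ * T * (Real.exp w.re * Real.cos w.im)) := by gcongr
        _ = _ := by
          rw [mul_assoc, ← Real.exp_add]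
          ring_nf
    have hgrow : ∃ c < π / (α - -α), ∃ B, F =O[comap (_root_.abs ∘ Complex.re) atTop ⊓
        𝓟 (Complex.im ⁻¹' Ioo (-α) α)] fun z => Real.exp (B * Real.exp (c * |z.re|)) := by
      refine ⟨1, ?_, κ * T, Asymptotics.IsBigO.of_bound C ?_⟩
      · rw [lt_div_iff₀ (by linarith)]
        linarith
      refine eventually_inf_principal.2 (Eventually.of_forall fun w hw => ?_)
      refine (hFb w (Ioo_subset_Icc_self hw)).trans ?_
      rw [Real.norm_of_nonneg (Real.exp_pos _).le]
      have h1 : Real.exp w.re ≤ Real.exp (1 * |w.re|) := Real.exp_le_exp.2 (by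
        rw [one_mul]; exact le_abs_self _)
      have h2 : κ * T * Real.cos w.im - κ * |Real.sin w.im| ≤ κ * T := by
        have h3 : κ * T * Real.cos w.im ≤ κ * T * 1 := by
          gcongr
          exact Real.cos_le_one _
        have : 0 ≤ κ * |Real.sin w.im| := by positivity
        linarith
      refine mul_le_mul_of_nonneg_left (Real.exp_le_exp.2 ?_) hC
      calc _ ≤ Real.exp w.re * (κ * T) := by gcongr
        _ ≤ Real.exp (1 * |w.re|) * (κ * T) := by gcongr
        _ = _ := mul_comm _ _
    have hsinpos : 0 < Real.sin α := Real.sin_pos_of_pos_of_lt_pi hα0 (by linarith [Real.pi_pos])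
    have hedge : ∀ w : ℂ, |w.im| = α → ‖F w‖ ≤ C := fun w hw => by
      have hmem : w.im ∈ Icc (-α) α := abs_le.1 hw.le
      refine (hFb w hmem).trans (le_of_eq ?_)
      have h1 : Real.cos w.im = Real.cos α := by rw [← Real.cos_abs, hw]
      have h2 : |Real.sin w.im| = Real.sin α := by
        rcases (abs_eq hα0.le).1 hw with h | h
        · rw [h, abs_of_pos hsinpos]
        · rw [h, Real.sin_neg, abs_neg, abs_of_pos hsinpos]
      rw [h1, h2, hsin]
      ring_nf
      simp
    have hs0 : 0 < s - S := sub_pos.2 hs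
    have hpl := PhragmenLindelof.horizontal_strip (z := ((Real.log (s - S) : ℝ) : ℂ)) (C := C)
      hdiff hgrow (fun w hw => hedge w (by rw [hw, abs_neg, abs_of_pos hα0]))
      (fun w hw => hedge w (by rw [hw, abs_of_pos hα0])) (by simp [hα0.le]) (by simp [hα0.le])
    have hexp : Complex.exp ((Real.log (s - S) : ℝ) : ℂ) = ((s - S : ℝ) : ℂ) := by
      rw [← Complex.ofReal_exp, Real.exp_log hs0]
    simp only [hF, hexp] at hpl
    rw [← Complex.ofReal_add, add_sub_cancel, norm_mul, Complex.norm_exp, ← Complex.ofReal_mul,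
      Complex.ofReal_re] at hpl
    rw [Real.exp_neg, ← div_eq_mul_inv, le_div_iff₀ (Real.exp_pos _)]
    exact hpl
  have htend : Tendsto (fun T : ℝ => C * Real.exp (-(κ * T * (s - S)))) atTop (𝓝 (C * 0)) := by
    refine (Real.tendsto_exp_neg_atTop_nhds_zero.comp ?_).const_mul C
    exact (tendsto_id.const_mul_atTop hκ).atTop_mul_const (sub_pos.2 hs)
  rw [mul_zero] at htend
  exact norm_le_zero_iff.1 (ge_of_tendsto htend ((eventually_gt_atTop 0).mono key))

/-- A radiation solution whose imaginary part vanishes near a point of a ray vanishes on the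
whole ray. -/
theorem IsRadiationSolution.eq_zero_on_ray {κ : ℝ} (hκ : 0 < κ) {U : Set R2} (hU : IsOpen U)
    (hK : IsCompact Uᶜ) {ψ : R2 → ℂ} (hψ : IsRadiationSolution κ U ψ) {p θ : R2} (hθ : ‖θ‖ = 1)
    (hray : ∀ s : ℝ, 0 < s → p + s • θ ∈ U) {s₀ : ℝ} (hs₀ : 0 < s₀)
    (him : ∀ᶠ s : ℝ in 𝓝 s₀, (ψ (p + s • θ)).im = 0) {s : ℝ} (hs : 0 < s) :
    ψ (p + s • θ) = 0 := by
  have han : AnalyticOnNhd ℝ (fun s : ℝ => ψ (p + s • θ)) (Ioi 0) := fun a ha => by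
    have h := analyticAt_comp_line hκ hU hψ.1 hψ.2.1 hθ (hray a ha)
    have hc : AnalyticAt ℝ (fun s : ℝ => s - a) a := analyticAt_id.sub analyticAt_const
    have h2 := AnalyticAt.fun_comp_of_eq h hc (sub_self a)
    refine h2.congr (Eventually.of_forall fun s => ?_)
    simp only [add_assoc, ← add_smul, add_sub_cancel]
  have him0 : ∀ s : ℝ, 0 < s → (ψ (p + s • θ)).im = 0 := fun s hs => by
    have hanim : AnalyticOnNhd ℝ (fun s : ℝ => (ψ (p + s • θ)).im) (Ioi 0) := fun a ha =>
      AnalyticAt.fun_comp (Complex.imCLM.analyticAt _) (han a ha)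
    exact hanim.eqOn_zero_of_preconnected_of_eventuallyEq_zero isPreconnected_Ioi hs₀ him hs
  obtain ⟨S, C, G, hS, hG, hb, hGψ⟩ := hψ.exists_holomorphic_extension hκ hU hK p hθ
  have hGim : ∀ s : ℝ, S < s → (G s).im = 0 := fun s hs => by
    rw [hGψ s hs]
    exact him0 s (hS.trans_lt hs)
  have hb2 : ∀ z : ℂ, S < z.re → ‖G z‖ ≤ C * Real.exp (-(κ * |z.im|)) := fun z hz => by
    rcases abs_cases z.im with h | h
    · rw [h.1]
      exact hb z hz
    · rw [h.1, eqOn_conj_of_im_eq_zero hG hGim hz, norm_star]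
      simpa using hb (star z) (by simpa using hz)
  have hfar : ∀ s : ℝ, S < s → ψ (p + s • θ) = 0 := fun s hs => by
    rw [← hGψ s hs]
    exact eq_zero_of_norm_le_exp_abs_im hκ hG hb2 hs
  exact han.eqOn_zero_of_preconnected_of_eventuallyEq_zero isPreconnected_Ioi
    (show S + 1 ∈ Ioi (0 : ℝ) by simp only [mem_Ioi]; linarith)
    (eventually_of_mem (Ioi_mem_nhds (lt_add_one S)) hfar) hs

theorem laplacian2_sub {v w : R2 → ℂ} {y : R2} (hv : ContDiffAt ℝ 2 v y) (hw : ContDiffAt ℝ 2 w y) :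
    laplacian2 (fun x => v x - w x) y = laplacian2 v y - laplacian2 w y := by
  have hd : ∀ {v : R2 → ℂ}, ContDiffAt ℝ 2 v y → DifferentiableAt ℝ (fderiv ℝ v) y := fun hv =>
    (hv.fderiv_right (m := 1) (by norm_num)).differentiableAt (by norm_num)
  have hev : ∀ {v : R2 → ℂ}, ContDiffAt ℝ 2 v y → ∀ᶠ x in 𝓝 y, DifferentiableAt ℝ v x :=
    fun hv => (hv.eventually (by norm_num)).mono fun x hx => hx.differentiableAt (by norm_num)
  have he : fderiv ℝ (fun x => v x - w x) =ᶠ[𝓝 y] fun x => fderiv ℝ v x - fderiv ℝ w x := by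
    filter_upwards [hev hv, hev hw] with x h1 h2
    exact fderiv_fun_sub h1 h2
  rw [laplacian2_eq hv, laplacian2_eq hw, laplacian2_eq (hv.sub hw), he.fderiv_eq,
    fderiv_fun_sub (hd hv) (hd hw), ← Finset.sum_sub_distrib]
  simp

theorem IsRadiationSolution.sub {κ : ℝ} {U : Set R2} (hU : IsOpen U) {ψ₁ ψ₂ : R2 → ℂ}
    (h₁ : IsRadiationSolution κ U ψ₁) (h₂ : IsRadiationSolution κ U ψ₂) :
    IsRadiationSolution κ U fun x => ψ₁ x - ψ₂ x := by
  obtain ⟨hc₁, he₁, hr₁⟩ := h₁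
  obtain ⟨hc₂, he₂, hr₂⟩ := h₂
  have hat₁ := fun x hx => hc₁.contDiffAt (hU.mem_nhds (x := x) hx)
  have hat₂ := fun x hx => hc₂.contDiffAt (hU.mem_nhds (x := x) hx)
  refine ⟨hc₁.sub hc₂, fun x hx => ?_, fun ε hε => ?_⟩
  · rw [laplacian2_sub (hat₁ x hx) (hat₂ x hx)]
    linear_combination he₁ x hx - he₂ x hx
  · obtain ⟨R₁, hR₁, h1⟩ := hr₁ (ε / 2) (by positivity)
    obtain ⟨R₂, -, h2⟩ := hr₂ (ε / 2) (by positivity)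
    refine ⟨max R₁ R₂, lt_max_of_lt_left hR₁, fun x hx hxR => ?_⟩
    have h1 := h1 x hx ((le_max_left _ _).trans hxR)
    have h2 := h2 x hx ((le_max_right _ _).trans hxR)
    rw [fderiv_fun_sub ((hat₁ x hx).differentiableAt (by norm_num))
      ((hat₂ x hx).differentiableAt (by norm_num)), sub_apply]
    refine lt_of_eq_of_lt (congrArg norm ?_) ((norm_sub_le _ _).trans_lt
      ((add_lt_add h1 h2).trans_eq (add_halves ε)))
    ring

theorem IsRadiationSolution.eq_on_ray_of_im_eq {κ : ℝ} (hκ : 0 < κ) {U : Set R2} (hU : IsOpen U)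
    (hK : IsCompact Uᶜ) {ψ₁ ψ₂ : R2 → ℂ} (h₁ : IsRadiationSolution κ U ψ₁)
    (h₂ : IsRadiationSolution κ U ψ₂) {p θ : R2} (hθ : ‖θ‖ = 1)
    (hray : ∀ s : ℝ, 0 < s → p + s • θ ∈ U) {V : Set R2} (hV : IsOpen V) {s₀ : ℝ} (hs₀ : 0 < s₀)
    (hmem : p + s₀ • θ ∈ V)
    (him : ∀ s : ℝ, 0 < s → p + s • θ ∈ V → (ψ₁ (p + s • θ)).im = (ψ₂ (p + s • θ)).im)
    {s : ℝ} (hs : 0 < s) : ψ₁ (p + s • θ) = ψ₂ (p + s • θ) := by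
  refine sub_eq_zero.1 ((h₁.sub hU h₂).eq_zero_on_ray hκ hU hK hθ hray hs₀ ?_ hs)
  have hcont : Continuous fun s : ℝ => p + s • θ := by fun_prop
  filter_upwards [lt_mem_nhds hs₀, hcont.continuousAt.preimage_mem_nhds (hV.mem_nhds hmem)]
    with s hs hsV
  rw [Complex.sub_im, him s hs hsV, sub_self]

theorem im_determines_radiation_solution_on_two_rays
    (κ : ℝ) (hκ : 0 < κ)
    (U : Set R2) (hUopen : IsOpen U) (hUconn : IsConnected U) (hKcpt : IsCompact Uᶜ)
    (θ x₁ x₂ : R2) (hθ : ‖θ‖ = 1) (t : ℝ) (hline : x₂ = x₁ + t • θ)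
    (Lp Lm : Set R2)
    (hLp : Lp = {x : R2 | ∃ s : ℝ, 0 < s ∧ x = x₁ + s • θ})
    (hLm : Lm = {x : R2 | ∃ s : ℝ, 0 < s ∧ x = x₂ - s • θ})
    (hLpU : Lp ⊆ U) (hLmU : Lm ⊆ U)
    (Λp Λm : Set R2) (hΛpne : Λp.Nonempty) (hΛmne : Λm.Nonempty)
    (hΛpopen : ∃ V : Set R2, IsOpen V ∧ Λp = V ∩ Lp)
    (hΛmopen : ∃ V : Set R2, IsOpen V ∧ Λm = V ∩ Lm)
    (ψ₁ ψ₂ : R2 → ℂ)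
    (h₁ : IsRadiationSolution κ U ψ₁) (h₂ : IsRadiationSolution κ U ψ₂)
    (him : ∀ x ∈ Λp ∪ Λm, (ψ₁ x).im = (ψ₂ x).im) :
    ∀ x ∈ Lp ∪ Lm, ψ₁ x = ψ₂ x := by
  have hsub : ∀ s : ℝ, x₂ + s • -θ = x₂ - s • θ := fun s => by rw [smul_neg, sub_eq_add_neg]
  obtain ⟨V, hV, rfl⟩ := hΛpopen
  obtain ⟨W, hW, rfl⟩ := hΛmopen
  subst hLp hLm
  rintro x (⟨s, hs, rfl⟩ | ⟨s, hs, rfl⟩)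
  · obtain ⟨-, hmem, s₀, hs₀, rfl⟩ := hΛpne
    exact h₁.eq_on_ray_of_im_eq hκ hUopen hKcpt h₂ hθ (fun s hs => hLpU ⟨s, hs, rfl⟩) hV hs₀ hmem
      (fun s hs hsV => him _ (Or.inl ⟨hsV, s, hs, rfl⟩)) hs
  · obtain ⟨-, hmem, s₀, hs₀, rfl⟩ := hΛmne
    rw [← hsub] at hmem ⊢
    exact h₁.eq_on_ray_of_im_eq hκ hUopen hKcpt h₂ (by rwa [norm_neg])
      (fun s hs => hLmU ⟨s, hs, hsub s⟩) hW hs₀ hmem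
      (fun s hs hsV => him _ (Or.inr ⟨hsV, s, hs, hsub s⟩)) hs
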